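/- Let F be the smallest family of finite posets containing all X-free posets and closed under disjoint unions and ordinal sums. Then every poset P in F satisfies s_k(O(P)) ≤ s_k(C(P)) for all k ≥ 0. -/

import Mathlib

open Set

variable {E : Type*} [AddCommGroup E] [Module ℝ E]

/-- A polytope: the convex hull of a finite set of points. -/
def IsPolytope (P : Set E) : Prop := ∃ S : Finset E, P = convexHull ℝ (S : Set E)

open Classical in
/-- Dimension of a polytope: `-1` for the empty set, else the dimension of its affine span. -/
noncomputable def polyDim (P : Set E) : ℤ :=
  if P = ∅ then -1 else (Module.finrank ℝ (vectorSpan ℝ P) : ℤ)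

/-- Number of vertices (extreme points). -/
noncomputable def vertexCount (P : Set E) : ℕ := (P.extremePoints ℝ).ncard

/-- A simplex: a polytope with `dim + 1` vertices (the empty set counts as a simplex). -/
def IsSimplex (P : Set E) : Prop :=
  IsPolytope P ∧ (vertexCount P : ℤ) = polyDim P + 1

/-- Faces of a polytope are its extreme subsets. -/
def IsFaceOf (F P : Set E) : Prop := IsExtreme ℝ P F

/-- Number of `k`-dimensional simplex faces of `P`. -/
noncomputable def simpCount (P : Set E) (k : ℤ) : ℕ :=
  {F : Set E | IsFaceOf F P ∧ IsSimplex F ∧ polyDim F = k}.ncard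

/-- Number of `k`-dimensional simplex faces of `P` containing the origin. -/
noncomputable def simpCount0 (P : Set E) (k : ℤ) : ℕ :=
  {F : Set E | IsFaceOf F P ∧ IsSimplex F ∧ polyDim F = k ∧ (0 : E) ∈ F}.ncard

/-- Number of `k`-dimensional simplex faces of `P` not containing the origin. -/
noncomputable def simpCount1 (P : Set E) (k : ℤ) : ℕ :=
  {F : Set E | IsFaceOf F P ∧ IsSimplex F ∧ polyDim F = k ∧ (0 : E) ∉ F}.ncard

/-- The order polytope of a poset. -/
def orderPolytope (α : Type*) [PartialOrder α] : Set (α → ℝ) :=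
  {x | (∀ p, 0 ≤ x p ∧ x p ≤ 1) ∧ ∀ p q : α, p ≤ q → x p ≤ x q}

/-- The chain polytope of a poset. -/
def chainPolytope (α : Type*) [PartialOrder α] : Set (α → ℝ) :=
  {x | (∀ p, 0 ≤ x p) ∧ ∀ s : Finset α, IsChain (· ≤ ·) (s : Set α) → ∑ p ∈ s, x p ≤ 1}

open Classical in
/-- Characteristic vector of a subset. -/
noncomputable def chi {α : Type*} (S : Set α) : α → ℝ := fun p => if p ∈ S then 1 else 0

/-- A poset contains the poset `X` (one middle element covering two incomparable minimal
elements and covered by two incomparable maximal elements) as an induced subposet. -/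
def HasX (α : Type) [PartialOrder α] : Prop :=
  ∃ a b m c d : α, a < m ∧ b < m ∧ m < c ∧ m < d ∧
    ¬ a ≤ b ∧ ¬ b ≤ a ∧ ¬ c ≤ d ∧ ¬ d ≤ c

/-- The family `F` of finite posets generated from `X`-free posets by disjoint unions
and ordinal sums (lexicographic sums). -/
inductive InFam : (α : Type) → PartialOrder α → Prop
  | xfree (α : Type) (inst : PartialOrder α) (hfin : Finite α) (hx : ¬ @HasX α inst) :
      InFam α inst
  | disjUnion {α β : Type} (ia : PartialOrder α) (ib : PartialOrder β) :
      InFam α ia → InFam β ib → InFam (α ⊕ β) (@Sum.instPartialOrder α β ia ib)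
  | ordinalSum {α β : Type} (ia : PartialOrder α) (ib : PartialOrder β) :
      InFam α ia → InFam β ib → InFam (α ⊕ₗ β) (@Sum.Lex.partialOrder α β ia ib)

/-!
A simplex face of a polytope is determined by its vertex set, so simplex faces form a simplicial
complex on the vertices and `s_k` counts its members with `k + 1` elements.

In an `X`-free poset, the elements whose principal ideal is a chain form a lower set, and every
other element has a principal filter which is a chain. Summing over ideals on the lower set, and
subtracting the sum over filters from `1` off it, is therefore an affine automorphism carrying the
chain polytope onto the order polytope.

A disjoint union turns both polytopes into products, and a simplex face of a product is a simplex
face of one factor times a vertex of the other.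

An ordinal sum turns the chain polytope into a subdirect sum of polytopes with vertex `0`, and the
order polytope too once the coordinates on the upper summand are reflected by `t ↦ 1 - t`. If `a`
and `b` are the generating functions of the link and the deletion of `0`, the complex of `P` has
generating function `x * a + b` and that of a subdirect sum has `x * (a * a') + b * b'`. The
inequality to be proved is reversed for links: a face of the chain polytope in the link of `0` is
supported on a chain of the poset, whereas every chain gives a simplex in the link of `0` in the
order polytope. The excess of the order polytope in the link is outweighed in the deletion because
the total is smaller.
-/

/-! ### Simplex faces and their numbers -/

variable {G : Type*} [AddCommGroup G] [Module ℝ G]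

theorem isExtreme_convexHull_of_subset {S T : Finset E}
    (hS : AffineIndependent ℝ ((↑) : S → E)) (hTS : T ⊆ S) :
    IsExtreme ℝ (convexHull ℝ (S : Set E)) (convexHull ℝ (T : Set E)) := by
  classical
  refine ⟨convexHull_mono (by exact_mod_cast hTS), fun x hx y hy z hz hzxy ↦ ?_⟩
  obtain ⟨v, hv, hv1, rfl⟩ := Finset.mem_convexHull'.1 hx
  obtain ⟨w, hw, hw1, rfl⟩ := Finset.mem_convexHull'.1 hy
  obtain ⟨u, -, hu1, rfl⟩ := Finset.mem_convexHull'.1 hz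
  obtain ⟨a, b, ha, hb, hab, hzw⟩ := hzxy
  have hweights : ∀ i ∈ S, a * v i + b * w i = if i ∈ T then u i else 0 := by
    refine hS.eq_of_sum_eq_sum_subtype ?_ ?_
    · rw [Finset.sum_add_distrib, ← Finset.mul_sum, ← Finset.mul_sum, hv1, hw1,
        Finset.sum_ite_mem, Finset.inter_eq_right.2 hTS, hu1, mul_one, mul_one, hab]
    · simp only [add_smul, mul_smul, Finset.sum_add_distrib, ← Finset.smul_sum, ite_smul,
        zero_smul, Finset.sum_ite_mem, Finset.inter_eq_right.2 hTS, hzw]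
  have hv0 : ∀ i ∈ S, i ∉ T → v i = 0 := fun i hi hiT ↦ by
    have := hweights i hi
    rw [if_neg hiT] at this
    nlinarith [hv i hi, mul_nonneg hb.le (hw i hi)]
  refine Finset.mem_convexHull'.2 ⟨v, fun i hi ↦ hv i (hTS hi), ?_, ?_⟩
  · rw [Finset.sum_subset hTS hv0, hv1]
  · exact Finset.sum_subset hTS fun i hi hiT ↦ by rw [hv0 i hi hiT, zero_smul]

theorem extremePoints_convexHull {S : Finset E} (hS : AffineIndependent ℝ ((↑) : S → E)) :
    (convexHull ℝ (S : Set E)).extremePoints ℝ = S := by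
  refine extremePoints_convexHull_subset.antisymm fun x hx ↦ ?_
  have := isExtreme_convexHull_of_subset hS (Finset.singleton_subset_iff.2 (Finset.mem_coe.1 hx))
  rwa [Finset.coe_singleton, convexHull_singleton, isExtreme_singleton] at this

theorem isExtreme_image_iff {e : E →ᵃ[ℝ] G} (he : Function.Injective e) {Q : Set G}
    (hQ : IsExtreme ℝ Q (Q ∩ range e)) {C : Set E} :
    IsExtreme ℝ Q (e '' C) ↔ IsExtreme ℝ (e ⁻¹' Q) C := by
  have hseg (x y z : E) : e z ∈ openSegment ℝ (e x) (e y) ↔ z ∈ openSegment ℝ x y := by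
    rw [← image_openSegment, he.mem_set_image]
  constructor
  · intro h
    refine ⟨image_subset_iff.1 h.subset, fun x hx y hy z hz hzxy ↦ ?_⟩
    exact he.mem_set_image.1 <|
      h.left_mem_of_mem_openSegment hx hy (mem_image_of_mem e hz) ((hseg x y z).2 hzxy)
  · intro h
    refine ⟨image_subset_iff.2 h.subset, ?_⟩
    rintro x hx y hy _ ⟨z, hz, rfl⟩ hzxy
    have hzQ : e z ∈ Q ∩ range e := ⟨h.subset hz, mem_range_self z⟩
    obtain ⟨-, x', rfl⟩ := hQ.left_mem_of_mem_openSegment hx hy hzQ hzxy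
    obtain ⟨-, y', rfl⟩ := hQ.right_mem_of_mem_openSegment hx hy hzQ hzxy
    exact mem_image_of_mem e (h.left_mem_of_mem_openSegment hx hy hz ((hseg x' y' z).1 hzxy))

/-- The simplex faces of `P`, each recorded by its vertex set. -/
def simplexFaces (P : Set E) : Set (Finset E) :=
  {S | AffineIndependent ℝ ((↑) : S → E) ∧ IsExtreme ℝ P (convexHull ℝ (S : Set E))}

theorem empty_mem_simplexFaces (P : Set E) : ∅ ∈ simplexFaces P :=
  ⟨affineIndependent_of_subsingleton ℝ _, by simp [isExtreme_iff]⟩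

theorem singleton_mem_simplexFaces {P : Set E} {x : E} :
    {x} ∈ simplexFaces P ↔ x ∈ P.extremePoints ℝ := by
  rw [simplexFaces, mem_ofPred_eq, Finset.coe_singleton, convexHull_singleton, isExtreme_singleton]
  exact and_iff_right (affineIndependent_of_subsingleton ℝ _)

namespace simplexFaces

variable {P : Set E} {S T : Finset E}

theorem affineIndependent_of_subset (hS : S ∈ simplexFaces P) (hTS : T ⊆ S) :
    AffineIndependent ℝ ((↑) : T → E) :=
  AffineIndependent.mono hS.1 (by exact_mod_cast hTS)

theorem mem_of_subset (hS : S ∈ simplexFaces P) (hTS : T ⊆ S) : T ∈ simplexFaces P :=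
  ⟨affineIndependent_of_subset hS hTS, hS.2.trans (isExtreme_convexHull_of_subset hS.1 hTS)⟩

theorem coe_subset_extremePoints (hS : S ∈ simplexFaces P) : (S : Set E) ⊆ P.extremePoints ℝ :=
  fun _ hx ↦ singleton_mem_simplexFaces.1
    (mem_of_subset hS (Finset.singleton_subset_iff.2 (Finset.mem_coe.1 hx)))

theorem coe_subset (hS : S ∈ simplexFaces P) : (S : Set E) ⊆ P :=
  (coe_subset_extremePoints hS).trans extremePoints_subset

theorem mem_of_mem_extremePoints (hS : S ∈ simplexFaces P) {x : E} (hx : x ∈ P.extremePoints ℝ)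
    (hxS : x ∈ convexHull ℝ (S : Set E)) : x ∈ S := by
  have := inter_extremePoints_subset_extremePoints_of_subset hS.2.subset ⟨hxS, hx⟩
  rwa [extremePoints_convexHull hS.1] at this

end simplexFaces

theorem finite_simplexFaces_iff {P : Set E} :
    (simplexFaces P).Finite ↔ (P.extremePoints ℝ).Finite := by
  constructor
  · intro h
    refine (h.preimage Finset.singleton_injective.injOn).subset fun x hx ↦ ?_
    exact singleton_mem_simplexFaces.2 hx
  · intro h
    exact (h.finite_subsets.preimage Finset.coe_injective.injOn).subset
      fun _ ↦ simplexFaces.coe_subset_extremePoints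

theorem map_mem_simplexFaces_iff {e : E →ᵃ[ℝ] G} (he : Function.Injective e) {Q : Set G}
    (hQ : IsExtreme ℝ Q (Q ∩ range e)) {S : Finset E} :
    S.map ⟨e, he⟩ ∈ simplexFaces Q ↔ S ∈ simplexFaces (e ⁻¹' Q) := by
  have hcoe : ((S.map ⟨e, he⟩ : Finset G) : Set G) = e '' S := Finset.coe_map _ _
  have hind : AffineIndependent ℝ ((↑) : (S.map ⟨e, he⟩ : Finset G) → G) ↔
      AffineIndependent ℝ ((↑) : S → E) := by
    rw [← e.affineIndependent_iff he, ← affineIndependent_equiv (S.equivMap ⟨e, he⟩)]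
    rfl
  rw [simplexFaces, simplexFaces, mem_ofPred_eq, mem_ofPred_eq, hind, hcoe,
    ← AffineMap.image_convexHull, isExtreme_image_iff he hQ]

theorem map_mem_simplexFaces_image_iff (e : E ≃ᵃ[ℝ] G) {P : Set E} {S : Finset E} :
    S.map e.toEquiv.toEmbedding ∈ simplexFaces (e '' P) ↔ S ∈ simplexFaces P := by
  have hrange : IsExtreme ℝ (e '' P) (e '' P ∩ range (e : E →ᵃ[ℝ] G)) := by
    rw [show range (e : E →ᵃ[ℝ] G) = univ from e.surjective.range_eq, inter_univ]
  have hpre : (e : E →ᵃ[ℝ] G) ⁻¹' (e '' P) = P := preimage_image_eq P e.injective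
  have := map_mem_simplexFaces_iff (e := (e : E →ᵃ[ℝ] G)) e.injective hrange (S := S)
  rwa [hpre] at this

theorem simplexFaces_image (e : E ≃ᵃ[ℝ] G) (P : Set E) :
    simplexFaces (e '' P) = Finset.map e.toEquiv.toEmbedding '' simplexFaces P := by
  ext S
  obtain ⟨T, rfl⟩ := e.toEquiv.finsetCongr.surjective S
  rw [Equiv.finsetCongr_apply, map_mem_simplexFaces_image_iff,
    (Finset.map_injective _).mem_set_image]

/-- The number of `n`-element members of a family of finite sets. -/
noncomputable def cardCount {ι : Type*} (𝒜 : Set (Finset ι)) (n : ℕ) : ℕ :=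
  {S ∈ 𝒜 | S.card = n}.ncard

theorem cardCount_image_map {ι κ : Type*} (f : ι ↪ κ) (𝒜 : Set (Finset ι)) (n : ℕ) :
    cardCount (Finset.map f '' 𝒜) n = cardCount 𝒜 n := by
  rw [cardCount, cardCount, ← ncard_image_of_injective _ (Finset.map_injective f)]
  congr 1
  ext S
  constructor
  · rintro ⟨⟨T, hT, rfl⟩, hn⟩
    exact ⟨T, ⟨hT, by rwa [Finset.card_map] at hn⟩, rfl⟩
  · rintro ⟨T, ⟨hT, hn⟩, rfl⟩
    exact ⟨mem_image_of_mem _ hT, by rwa [Finset.card_map]⟩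

theorem cardCount_mono {ι : Type*} {𝒜 ℬ : Set (Finset ι)} (h : 𝒜 ⊆ ℬ) (hℬ : ℬ.Finite) (n : ℕ) :
    cardCount 𝒜 n ≤ cardCount ℬ n :=
  ncard_le_ncard (fun _ hS ↦ ⟨h hS.1, hS.2⟩) (hℬ.subset (sep_subset _ _))

theorem cardCount_simplexFaces_zero (P : Set E) : cardCount (simplexFaces P) 0 = 1 := by
  have : {S ∈ simplexFaces P | S.card = 0} = {∅} := by
    ext S
    simpa using fun h : S = ∅ ↦ h ▸ empty_mem_simplexFaces P
  rw [cardCount, this, ncard_singleton]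

theorem cardCount_simplexFaces_one (P : Set E) :
    cardCount (simplexFaces P) 1 = (P.extremePoints ℝ).ncard := by
  rw [cardCount, ← ncard_image_of_injective (P.extremePoints ℝ) Finset.singleton_injective]
  congr 1
  ext S
  simp only [mem_ofPred_eq, Finset.card_eq_one, mem_image]
  constructor
  · rintro ⟨hS, x, rfl⟩
    exact ⟨x, singleton_mem_simplexFaces.1 hS, rfl⟩
  · rintro ⟨x, hx, rfl⟩
    exact ⟨singleton_mem_simplexFaces.2 hx, x, rfl⟩

theorem finite_simplexFaces_image_iff (e : E ≃ᵃ[ℝ] G) {P : Set E} :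
    (simplexFaces (e '' P)).Finite ↔ (simplexFaces P).Finite := by
  rw [simplexFaces_image, finite_image_iff (Finset.map_injective _).injOn]

theorem cardCount_simplexFaces_image (e : E ≃ᵃ[ℝ] G) (P : Set E) (n : ℕ) :
    cardCount (simplexFaces (e '' P)) n = cardCount (simplexFaces P) n := by
  rw [simplexFaces_image, cardCount_image_map]

/-- `P` and `Q` have finitely many simplex faces, and in each dimension `Q` has at least as many of
them as `P`. -/
structure SimplexFacesLE (P : Set E) (Q : Set G) : Prop where
  finite_left : (simplexFaces P).Finite
  finite_right : (simplexFaces Q).Finite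
  cardCount_le (n : ℕ) : cardCount (simplexFaces P) n ≤ cardCount (simplexFaces Q) n

theorem SimplexFacesLE.image_iff {E' G' : Type*} [AddCommGroup E'] [Module ℝ E'] [AddCommGroup G']
    [Module ℝ G'] (e : E ≃ᵃ[ℝ] E') (f : G ≃ᵃ[ℝ] G') {P : Set E} {Q : Set G} :
    SimplexFacesLE (e '' P) (f '' Q) ↔ SimplexFacesLE P Q := by
  constructor <;> rintro ⟨hP, hQ, hle⟩
  · rw [finite_simplexFaces_image_iff] at hP hQ
    simp only [cardCount_simplexFaces_image] at hle
    exact ⟨hP, hQ, hle⟩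
  · refine ⟨(finite_simplexFaces_image_iff e).2 hP, (finite_simplexFaces_image_iff f).2 hQ, ?_⟩
    simpa only [cardCount_simplexFaces_image] using hle

theorem polyDim_convexHull {S : Set E} (hS : S.Nonempty) :
    polyDim (convexHull ℝ S) = Module.finrank ℝ (vectorSpan ℝ S) := by
  rw [polyDim, if_neg (convexHull_nonempty_iff.2 hS).ne_empty, ← direction_affineSpan,
    affineSpan_convexHull, direction_affineSpan]

theorem affineIndependent_iff_polyDim_convexHull {S : Finset E} :
    AffineIndependent ℝ ((↑) : S → E) ↔ polyDim (convexHull ℝ (S : Set E)) + 1 = S.card := by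
  obtain rfl | hS := S.eq_empty_or_nonempty
  · simp [polyDim, affineIndependent_of_subsingleton]
  · obtain ⟨n, hn⟩ := Nat.exists_eq_succ_of_ne_zero hS.card_ne_zero
    rw [affineIndependent_iff_finrank_vectorSpan_eq ℝ ((↑) : S → E) (n := n) (by simpa using hn),
      polyDim_convexHull (by exact_mod_cast hS), hn]
    have hrange : range ((↑) : S → E) = (S : Set E) := Subtype.range_coe
    rw [hrange]
    push_cast
    exact ⟨fun h ↦ by rw [h], fun h ↦ by linarith⟩

section Topology

variable [TopologicalSpace E] [T2Space E] [IsTopologicalAddGroup E] [ContinuousSMul ℝ E]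
  [LocallyConvexSpace ℝ E]

theorem IsPolytope.convexHull_extremePoints {F : Set E} (hF : IsPolytope F) :
    (F.extremePoints ℝ).Finite ∧ convexHull ℝ (F.extremePoints ℝ) = F := by
  obtain ⟨S, rfl⟩ := hF
  have hfin : ((convexHull ℝ (S : Set E)).extremePoints ℝ).Finite :=
    S.finite_toSet.subset extremePoints_convexHull_subset
  refine ⟨hfin, ?_⟩
  rw [← (hfin.isCompact_convexHull ℝ).isClosed.closure_eq]
  exact closure_convexHull_extremePoints (S.finite_toSet.isCompact_convexHull ℝ)
    (convex_convexHull ℝ _)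

theorem isSimplex_iff {F : Set E} :
    IsSimplex F ↔
      ∃ S : Finset E, AffineIndependent ℝ ((↑) : S → E) ∧ convexHull ℝ (S : Set E) = F := by
  constructor
  · rintro ⟨hF, hcard⟩
    obtain ⟨hfin, hhull⟩ := hF.convexHull_extremePoints
    lift F.extremePoints ℝ to Finset E using hfin with S hS
    refine ⟨S, affineIndependent_iff_polyDim_convexHull.2 ?_, hhull⟩
    rw [hhull, ← hcard, vertexCount, ← hS, ncard_coe_finset]
  · rintro ⟨S, hS, rfl⟩
    refine ⟨⟨S, rfl⟩, ?_⟩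
    rw [vertexCount, extremePoints_convexHull hS, ncard_coe_finset,
      affineIndependent_iff_polyDim_convexHull.1 hS]

theorem simpCount_eq_cardCount (P : Set E) (n : ℕ) :
    simpCount P n = cardCount (simplexFaces P) (n + 1) := by
  have hinj : InjOn (fun S : Finset E ↦ convexHull ℝ (S : Set E))
      {S ∈ simplexFaces P | S.card = n + 1} := fun S hS T hT hST ↦
    Finset.coe_injective <| by
      rw [← extremePoints_convexHull hS.1.1, ← extremePoints_convexHull hT.1.1]
      exact congrArg _ hST
  rw [simpCount, cardCount, ← hinj.ncard_image]
  congr 1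
  ext F
  constructor
  · rintro ⟨hface, hF, hdim⟩
    obtain ⟨S, hS, rfl⟩ := isSimplex_iff.1 hF
    have := affineIndependent_iff_polyDim_convexHull.1 hS
    exact ⟨S, ⟨⟨hS, hface⟩, by rw [hdim] at this; exact_mod_cast this.symm⟩, rfl⟩
  · rintro ⟨S, ⟨⟨hS, hface⟩, hcard⟩, rfl⟩
    have := affineIndependent_iff_polyDim_convexHull.1 hS
    exact ⟨hface, isSimplex_iff.2 ⟨S, hS, rfl⟩, by rw [hcard] at this; push_cast at this; linarith⟩

end Topology

/-! ### Products -/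

section Prod

variable {P : Set E} {Q : Set G}

theorem isExtreme_prod {A : Set E} {B : Set G} (hA : IsExtreme ℝ P A) (hB : IsExtreme ℝ Q B) :
    IsExtreme ℝ (P ×ˢ Q) (A ×ˢ B) := by
  refine ⟨prod_mono hA.subset hB.subset, ?_⟩
  rintro x ⟨hx₁, hx₂⟩ y ⟨hy₁, hy₂⟩ z ⟨hz₁, hz₂⟩ ⟨a, b, ha, hb, hab, rfl⟩
  exact ⟨hA.left_mem_of_mem_openSegment hx₁ hy₁ hz₁ ⟨a, b, ha, hb, hab, rfl⟩,
    hB.left_mem_of_mem_openSegment hx₂ hy₂ hz₂ ⟨a, b, ha, hb, hab, rfl⟩⟩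

theorem map_sectR_mem_simplexFaces_prod {x : E} (hx : x ∈ P.extremePoints ℝ) {T : Finset G} :
    T.map (.sectR x G) ∈ simplexFaces (P ×ˢ Q) ↔ T ∈ simplexFaces Q := by
  let e : G →ᵃ[ℝ] E × G := (AffineMap.const ℝ G x).prod (AffineMap.id ℝ G)
  have hinj : Function.Injective e := (Function.Embedding.sectR x G).injective
  have hpre : e ⁻¹' (P ×ˢ Q) = Q := by
    ext y
    exact and_iff_right hx.1
  have hrange : P ×ˢ Q ∩ range e = {x} ×ˢ Q := by
    ext ⟨u, v⟩
    constructor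
    · rintro ⟨⟨-, hv⟩, y, h⟩
      exact ⟨(congrArg Prod.fst h).symm, hv⟩
    · rintro ⟨rfl, hv⟩
      exact ⟨⟨hx.1, hv⟩, v, rfl⟩
  have hext : IsExtreme ℝ (P ×ˢ Q) (P ×ˢ Q ∩ range e) :=
    hrange ▸ isExtreme_prod (isExtreme_singleton.2 hx) .rfl
  have := map_mem_simplexFaces_iff hinj hext (S := T)
  rwa [hpre] at this

theorem map_sectL_mem_simplexFaces_prod {y : G} (hy : y ∈ Q.extremePoints ℝ) {T : Finset E} :
    T.map (.sectL E y) ∈ simplexFaces (P ×ˢ Q) ↔ T ∈ simplexFaces P := by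
  rw [← map_mem_simplexFaces_image_iff (LinearEquiv.prodComm ℝ E G).toAffineEquiv, Finset.map_map,
    ← map_sectR_mem_simplexFaces_prod (Q := P) hy, ← image_swap_prod P Q]
  rfl

namespace simplexFaces

theorem mem_pair_of_midpoint_eq {S : Finset E} (hS : S ∈ simplexFaces P) {p q r t : E}
    (hp : p ∈ S) (hq : q ∈ S) (hr : r ∈ P.extremePoints ℝ) (ht : t ∈ P.extremePoints ℝ)
    (h : midpoint ℝ p q = midpoint ℝ r t) : r = p ∨ r = q ∨ t = p ∨ t = q := by
  classical
  have hmem (u v : E) : midpoint ℝ u v ∈ convexHull ℝ (({u, v} : Finset E) : Set E) := by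
    rw [Finset.coe_pair, convexHull_pair]
    exact midpoint_mem_segment u v
  have hpq : {p, q} ⊆ S := Finset.insert_subset hp (Finset.singleton_subset_iff.2 hq)
  have hface : midpoint ℝ r t ∈ convexHull ℝ (S : Set E) :=
    h ▸ convexHull_mono (by exact_mod_cast hpq) (hmem p q)
  have hopen := midpoint_mem_openSegment (𝕜 := ℝ) r t
  have hrt : {r, t} ⊆ S := Finset.insert_subset
    (mem_of_mem_extremePoints hS hr (hS.2.left_mem_of_mem_openSegment hr.1 ht.1 hface hopen))
    (Finset.singleton_subset_iff.2 <|
      mem_of_mem_extremePoints hS ht (hS.2.right_mem_of_mem_openSegment hr.1 ht.1 hface hopen))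
  have hinter : midpoint ℝ r t ∈
      convexHull ℝ ((({p, q} : Finset E) : Set E) ∩ ({r, t} : Finset E)) := by
    rw [hS.1.convexHull_inter hpq hrt]
    exact ⟨h ▸ hmem p q, hmem r t⟩
  obtain ⟨u, hu, hu'⟩ := convexHull_nonempty_iff.1 ⟨_, hinter⟩
  rw [Finset.coe_pair, mem_insert_iff, mem_singleton_iff] at hu hu'
  grind

end simplexFaces

theorem mem_extremePoints_of_mem_simplexFaces_prod {S : Finset (E × G)}
    (hS : S ∈ simplexFaces (P ×ˢ Q)) {p : E × G} (hp : p ∈ S) :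
    p.1 ∈ P.extremePoints ℝ ∧ p.2 ∈ Q.extremePoints ℝ := by
  have := simplexFaces.coe_subset_extremePoints hS hp
  rwa [extremePoints_prod] at this

theorem fst_eq_or_snd_eq_of_mem_simplexFaces_prod {S : Finset (E × G)}
    (hS : S ∈ simplexFaces (P ×ˢ Q)) {p q : E × G} (hp : p ∈ S) (hq : q ∈ S) :
    p.1 = q.1 ∨ p.2 = q.2 := by
  obtain ⟨hp₁, hp₂⟩ := mem_extremePoints_of_mem_simplexFaces_prod hS hp
  obtain ⟨hq₁, hq₂⟩ := mem_extremePoints_of_mem_simplexFaces_prod hS hq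
  -- The midpoint of two opposite corners of a square is also that of the other two corners.
  have hmid : midpoint ℝ p q = midpoint ℝ (p.1, q.2) (q.1, p.2) := by
    ext <;> simp [midpoint_eq_smul_add, add_comm]
  have := simplexFaces.mem_pair_of_midpoint_eq hS hp hq (r := (p.1, q.2)) (t := (q.1, p.2))
    (by rw [extremePoints_prod]; exact ⟨hp₁, hq₂⟩)
    (by rw [extremePoints_prod]; exact ⟨hq₁, hp₂⟩) hmid
  simp only [Prod.ext_iff] at this
  grind

theorem finite_simplexFaces_prod (hP : (simplexFaces P).Finite) (hQ : (simplexFaces Q).Finite) :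
    (simplexFaces (P ×ˢ Q)).Finite := by
  rw [finite_simplexFaces_iff] at hP hQ ⊢
  rw [extremePoints_prod]
  exact hP.prod hQ

theorem exists_map_eq_of_coe_subset_range {ι κ : Type*} {f : ι ↪ κ} {S : Finset κ}
    (h : (S : Set κ) ⊆ range f) : ∃ T : Finset ι, T.map f = S := by
  classical
  rw [← image_univ, Finset.subset_set_image_iff] at h
  obtain ⟨T, -, hT⟩ := h
  exact ⟨T, by rwa [Finset.map_eq_image]⟩

theorem mem_simplexFaces_prod_iff {S : Finset (E × G)} (hS : S.Nonempty) :
    S ∈ simplexFaces (P ×ˢ Q) ↔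
      (∃ x ∈ P.extremePoints ℝ, ∃ T ∈ simplexFaces Q, T.map (.sectR x G) = S) ∨
        ∃ y ∈ Q.extremePoints ℝ, ∃ T ∈ simplexFaces P, T.map (.sectL E y) = S := by
  constructor
  · intro h
    obtain ⟨p, hp⟩ := hS
    obtain ⟨hp₁, hp₂⟩ := mem_extremePoints_of_mem_simplexFaces_prod h hp
    have hpair (q) (hq : q ∈ S) (r) (hr : r ∈ S) :=
      fst_eq_or_snd_eq_of_mem_simplexFaces_prod h hq hr
    by_cases hfst : ∀ q ∈ S, q.1 = p.1
    · obtain ⟨T, rfl⟩ : ∃ T : Finset G, T.map (.sectR p.1 G) = S :=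
        exists_map_eq_of_coe_subset_range fun q hq ↦ ⟨q.2, Prod.ext (hfst q hq).symm rfl⟩
      exact .inl ⟨p.1, hp₁, T, (map_sectR_mem_simplexFaces_prod hp₁).1 h, rfl⟩
    · have hsnd : ∀ q ∈ S, q.2 = p.2 := by grind
      obtain ⟨T, rfl⟩ : ∃ T : Finset E, T.map (.sectL E p.2) = S :=
        exists_map_eq_of_coe_subset_range fun q hq ↦ ⟨q.1, Prod.ext rfl (hsnd q hq).symm⟩
      exact .inr ⟨p.2, hp₂, T, (map_sectL_mem_simplexFaces_prod hp₂).1 h, rfl⟩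
  · rintro (⟨x, hx, T, hT, rfl⟩ | ⟨y, hy, T, hT, rfl⟩)
    · exact (map_sectR_mem_simplexFaces_prod hx).2 hT
    · exact (map_sectL_mem_simplexFaces_prod hy).2 hT

theorem injOn_map_sectR {ι κ : Type*} :
    InjOn (fun p : ι × Finset κ ↦ p.2.map (.sectR p.1 κ)) {p | p.2.Nonempty} := by
  rintro ⟨x, S⟩ hS ⟨y, T⟩ - h
  replace h : S.map (.sectR x κ) = T.map (.sectR y κ) := h
  obtain ⟨z, hz⟩ := hS
  have hmem : (x, z) ∈ T.map (.sectR y κ) := h ▸ Finset.mem_map_of_mem (.sectR x κ) hz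
  obtain ⟨w, -, hw⟩ := Finset.mem_map.1 hmem
  obtain rfl : y = x := congrArg Prod.fst hw
  exact Prod.ext rfl (Finset.map_injective _ h)

theorem injOn_map_sectL {ι κ : Type*} :
    InjOn (fun p : κ × Finset ι ↦ p.2.map (.sectL ι p.1)) {p | p.2.Nonempty} := by
  intro p hp q hq h
  have := congrArg (Finset.map (Equiv.prodComm ι κ).toEmbedding) h
  simp only [Finset.map_map] at this
  exact injOn_map_sectR hp hq this

theorem card_le_one_of_map_sectR_eq_map_sectL {ι κ : Type*} {x : ι} {y : κ} {S : Finset κ}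
    {T : Finset ι} (h : S.map (.sectR x κ) = T.map (.sectL ι y)) : S.card ≤ 1 := by
  have hS (z) (hz : z ∈ S) : z = y := by
    have hmem : (x, z) ∈ T.map (.sectL ι y) := h ▸ Finset.mem_map_of_mem (.sectR x κ) hz
    obtain ⟨w, -, hw⟩ := Finset.mem_map.1 hmem
    exact (congrArg Prod.snd hw).symm
  exact Finset.card_le_one.2 fun z hz w hw ↦ (hS z hz).trans (hS w hw).symm

theorem cardCount_simplexFaces_prod (hP : (simplexFaces P).Finite) (hQ : (simplexFaces Q).Finite)
    {n : ℕ} (hn : 2 ≤ n) :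
    cardCount (simplexFaces (P ×ˢ Q)) n =
      cardCount (simplexFaces P) 1 * cardCount (simplexFaces Q) n +
        cardCount (simplexFaces Q) 1 * cardCount (simplexFaces P) n := by
  set A := P.extremePoints ℝ ×ˢ {T ∈ simplexFaces Q | T.card = n}
  set B := Q.extremePoints ℝ ×ˢ {T ∈ simplexFaces P | T.card = n}
  have hA : A ⊆ {p | p.2.Nonempty} := fun p hp ↦ Finset.card_pos.1 (by grind)
  have hB : B ⊆ {p | p.2.Nonempty} := fun p hp ↦ Finset.card_pos.1 (by grind)
  have hunion : {S ∈ simplexFaces (P ×ˢ Q) | S.card = n} =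
      (fun p ↦ p.2.map (.sectR p.1 G)) '' A ∪ (fun p ↦ p.2.map (.sectL E p.1)) '' B := by
    ext S
    constructor
    · rintro ⟨hS, hcard⟩
      obtain ⟨x, hx, T, hT, rfl⟩ | ⟨y, hy, T, hT, rfl⟩ :=
        (mem_simplexFaces_prod_iff (Finset.card_pos.1 (by omega))).1 hS <;>
        rw [Finset.card_map] at hcard
      · exact .inl ⟨(x, T), ⟨hx, hT, hcard⟩, rfl⟩
      · exact .inr ⟨(y, T), ⟨hy, hT, hcard⟩, rfl⟩
    · rintro (⟨⟨x, T⟩, ⟨hx, hT, hcard⟩, rfl⟩ | ⟨⟨y, T⟩, ⟨hy, hT, hcard⟩, rfl⟩)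
      · exact ⟨(map_sectR_mem_simplexFaces_prod hx).2 hT, by rwa [Finset.card_map]⟩
      · exact ⟨(map_sectL_mem_simplexFaces_prod hy).2 hT, by rwa [Finset.card_map]⟩
  have hdisj : Disjoint ((fun p ↦ p.2.map (.sectR p.1 G)) '' A)
      ((fun p ↦ p.2.map (.sectL E p.1)) '' B) := by
    refine disjoint_left.2 ?_
    rintro _ ⟨p, hp, rfl⟩ ⟨q, -, hpq⟩
    have := card_le_one_of_map_sectR_eq_map_sectL hpq.symm
    grind
  have hAfin : A.Finite := (finite_simplexFaces_iff.1 hP).prod (hQ.subset (sep_subset _ _))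
  have hBfin : B.Finite := (finite_simplexFaces_iff.1 hQ).prod (hP.subset (sep_subset _ _))
  rw [cardCount, hunion, ncard_union_eq hdisj (hAfin.image _) (hBfin.image _),
    (injOn_map_sectR.mono hA).ncard_image, (injOn_map_sectL.mono hB).ncard_image, ncard_prod,
    ncard_prod, cardCount_simplexFaces_one, cardCount_simplexFaces_one]
  rfl

end Prod

theorem SimplexFacesLE.prod {E' G' : Type*} [AddCommGroup E'] [Module ℝ E'] [AddCommGroup G']
    [Module ℝ G'] {P : Set E} {P' : Set E'} {Q : Set G} {Q' : Set G'} (hP : SimplexFacesLE P P')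
    (hQ : SimplexFacesLE Q Q') : SimplexFacesLE (P ×ˢ Q) (P' ×ˢ Q') where
  finite_left := finite_simplexFaces_prod hP.finite_left hQ.finite_left
  finite_right := finite_simplexFaces_prod hP.finite_right hQ.finite_right
  cardCount_le
  | 0 => by rw [cardCount_simplexFaces_zero, cardCount_simplexFaces_zero]
  | 1 => by
    have hP1 := hP.cardCount_le 1
    have hQ1 := hQ.cardCount_le 1
    rw [cardCount_simplexFaces_one, cardCount_simplexFaces_one] at hP1 hQ1 ⊢
    rw [extremePoints_prod, extremePoints_prod, ncard_prod, ncard_prod]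
    exact Nat.mul_le_mul hP1 hQ1
  | n + 2 => by
    rw [cardCount_simplexFaces_prod hP.finite_left hQ.finite_left (by omega),
      cardCount_simplexFaces_prod hP.finite_right hQ.finite_right (by omega)]
    gcongr <;> first | exact hP.cardCount_le _ | exact hQ.cardCount_le _

/-! ### Subdirect sums -/

section Cone

open Pointwise

theorem sum_smul_mem_smul_convexHull {S : Finset E} (hS : S.Nonempty) {w : E → ℝ}
    (hw : ∀ i ∈ S, 0 ≤ w i) :
    ∑ i ∈ S, w i • i ∈ (∑ i ∈ S, w i) • convexHull ℝ (S : Set E) := by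
  obtain hsum | hsum := (Finset.sum_nonneg hw).eq_or_lt
  · have hw0 : ∀ i ∈ S, w i = 0 := (Finset.sum_eq_zero_iff_of_nonneg hw).1 hsum.symm
    rw [← hsum, zero_smul_set (by simpa using hS), Finset.sum_eq_zero fun i hi ↦ by
      rw [hw0 i hi, zero_smul]]
    exact zero_mem_zero
  · refine ⟨S.centerMass w id, S.centerMass_id_mem_convexHull hw hsum, ?_⟩
    simp only [Finset.centerMass, smul_inv_smul₀ hsum.ne', id_eq]

variable {P F : Set E}

theorem le_of_mem_smul_of_mem_smul (hF : IsExtreme ℝ P F) (hP : (0 : E) ∈ P) (h0 : (0 : E) ∉ F)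
    {x : E} {a c : ℝ} (ha : 0 ≤ a) (hx : x ∈ a • P) (hxF : x ∈ c • F) : c ≤ a := by
  by_contra! hac
  have hc : 0 < c := ha.trans_lt hac
  obtain ⟨p, hp, rfl⟩ := hx
  obtain ⟨f, hf, hfp : c • f = a • p⟩ := hxF
  have hf_eq : f = (a / c) • p := by rw [div_eq_inv_mul, mul_smul, ← hfp, inv_smul_smul₀ hc.ne']
  obtain rfl | ha := ha.eq_or_lt
  · exact h0 (by simpa [hf_eq] using hf)
  · refine h0 (hF.right_mem_of_mem_openSegment hp hP hf ?_)
    exact ⟨a / c, 1 - a / c, by positivity, sub_pos.2 ((div_lt_one hc).2 hac), by ring, by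
      rw [smul_zero, add_zero, hf_eq]⟩

theorem mem_smul_of_mem_smul_of_mem (hF : IsExtreme ℝ P F) (h0 : (0 : E) ∈ F) {x : E} {a : ℝ}
    (ha : 0 ≤ a) (ha1 : a ≤ 1) (hx : x ∈ a • P) (hxF : x ∈ F) : x ∈ a • F := by
  obtain ⟨p, hp, rfl⟩ := hx
  obtain rfl | ha := ha.eq_or_lt
  · exact ⟨0, h0, by simp⟩
  obtain rfl | ha1 := ha1.eq_or_lt
  · simpa using hxF
  · exact smul_mem_smul_set (hF.left_mem_of_mem_openSegment hp (hF.subset h0) hxF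
      ⟨a, 1 - a, ha, sub_pos.2 ha1, by ring, by simp⟩)

theorem smul_add_smul_mem_smul (hP : Convex ℝ P) {x y : E} {a b s t : ℝ} (ha : 0 ≤ a)
    (hb : 0 ≤ b) (hs : 0 ≤ s) (ht : 0 ≤ t) (hx : x ∈ a • P) (hy : y ∈ b • P) :
    s • x + t • y ∈ (s * a + t * b) • P := by
  rw [hP.add_smul (by positivity) (by positivity), mul_smul, mul_smul]
  exact add_mem_add (smul_mem_smul_set hx) (smul_mem_smul_set hy)

theorem left_mem_smul_of_mem_smul (hF : IsExtreme ℝ P F) (hne : F.Nonempty) {x y : E}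
    {a b s t : ℝ} (ha : 0 ≤ a) (hb : 0 ≤ b) (hs : 0 < s) (ht : 0 < t) (hx : x ∈ a • P)
    (hy : y ∈ b • P) (h : s • x + t • y ∈ (s * a + t * b) • F) : x ∈ a • F := by
  obtain ⟨p, hp, rfl⟩ := hx
  obtain ⟨q, hq, rfl⟩ := hy
  obtain ⟨f, hf, hfpq : (s * a + t * b) • f = s • a • p + t • b • q⟩ := h
  obtain rfl | ha := ha.eq_or_lt
  · simp [zero_smul_set hne]
  set c := s * a + t * b
  have hc : 0 < c := by positivity
  have hf_eq : f = (s * a / c) • p + (t * b / c) • q := by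
    rw [← inv_smul_smul₀ hc.ne' f, hfpq]
    module
  refine smul_mem_smul_set ?_
  obtain rfl | hb := hb.eq_or_lt
  · have hc' : c = s * a := by simp [c]
    rw [hc', div_self (by positivity), mul_zero, zero_div, one_smul, zero_smul, add_zero] at hf_eq
    exact hf_eq ▸ hf
  · refine hF.left_mem_of_mem_openSegment hp hq hf
      ⟨s * a / c, t * b / c, by positivity, by positivity, ?_, hf_eq.symm⟩
    rw [← add_div, div_self hc.ne']

namespace simplexFaces

theorem zero_notMem_convexHull {S : Finset E} (hS : S ∈ simplexFaces P)
    (h0 : (0 : E) ∈ P.extremePoints ℝ) (h0S : 0 ∉ S) : (0 : E) ∉ convexHull ℝ (S : Set E) :=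
  fun h ↦ h0S (mem_of_mem_extremePoints hS h0 h)

theorem linearIndepOn {S : Finset E} (hS : S ∈ simplexFaces P)
    (h0 : (0 : E) ∈ P.extremePoints ℝ) (h0S : 0 ∉ S) : LinearIndepOn ℝ id (S : Set E) := by
  obtain rfl | hne := S.eq_empty_or_nonempty
  · simp
  refine linearIndepOn_finset_iff.2 fun w hw ↦ hS.1.eq_zero_of_sum_eq_zero_subtype ?_ hw
  have hparts : ∑ i ∈ S, (w i)⁺ • i = ∑ i ∈ S, (w i)⁻ • i := by
    rw [← sub_eq_zero, ← Finset.sum_sub_distrib]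
    simpa only [← sub_smul, posPart_sub_negPart, id_eq] using hw
  have hpos := sum_smul_mem_smul_convexHull hne (w := fun i ↦ (w i)⁺) fun i _ ↦ posPart_nonneg _
  have hneg := sum_smul_mem_smul_convexHull hne (w := fun i ↦ (w i)⁻) fun i _ ↦ negPart_nonneg _
  rw [hparts] at hpos
  have hsub (c : ℝ) := smul_set_mono (a := c) hS.2.subset
  have hle {x : E} {a c : ℝ} := le_of_mem_smul_of_mem_smul hS.2 h0.1
    (zero_notMem_convexHull hS h0 h0S) (x := x) (a := a) (c := c)
  have : ∑ i ∈ S, (w i)⁺ = ∑ i ∈ S, (w i)⁻ :=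
    (hle (Finset.sum_nonneg fun i _ ↦ negPart_nonneg _) (hsub _ hneg) hpos).antisymm
      (hle (Finset.sum_nonneg fun i _ ↦ posPart_nonneg _) (hsub _ hpos) hneg)
  rw [← sub_eq_zero, ← Finset.sum_sub_distrib] at this
  simpa only [posPart_sub_negPart] using this

end simplexFaces

end Cone

section SubdirectSum

open Pointwise

/-- The subdirect sum of `P` and `Q`: the convex hull of `P` and `Q` placed in complementary
coordinate subspaces. -/
def subdirectSum (P : Set E) (Q : Set G) : Set (E × G) :=
  convexHull ℝ (P ×ˢ {0} ∪ {0} ×ˢ Q)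

theorem subdirectSum_convexHull (S : Set E) (T : Set G) :
    subdirectSum (convexHull ℝ S) (convexHull ℝ T) = convexHull ℝ (S ×ˢ {0} ∪ {0} ×ˢ T) := by
  conv_rhs => rw [← convexHull_convexHull_union_left, ← convexHull_convexHull_union_right,
    convexHull_prod, convexHull_prod, convexHull_singleton, convexHull_singleton]
  rfl

theorem subdirectSum_mono {P P' : Set E} {Q Q' : Set G} (hP : P ⊆ P') (hQ : Q ⊆ Q') :
    subdirectSum P Q ⊆ subdirectSum P' Q' :=
  convexHull_mono (union_subset_union (prod_mono hP .rfl) (prod_mono .rfl hQ))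

variable {P : Set E} {Q : Set G}

theorem mem_subdirectSum_iff (hP : Convex ℝ P) (hQ : Convex ℝ Q) (hPne : P.Nonempty)
    (hQne : Q.Nonempty) {z : E × G} :
    z ∈ subdirectSum P Q ↔
      ∃ a b : ℝ, 0 ≤ a ∧ 0 ≤ b ∧ a + b = 1 ∧ z.1 ∈ a • P ∧ z.2 ∈ b • Q := by
  rw [subdirectSum, (hP.prod (convex_singleton 0)).convexHull_union ((convex_singleton 0).prod hQ)
    (hPne.prod (singleton_nonempty 0)) ((singleton_nonempty 0).prod hQne), mem_convexJoin]
  constructor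
  · rintro ⟨⟨p, -⟩, ⟨hp, rfl⟩, ⟨-, q⟩, ⟨rfl, hq⟩, a, b, ha, hb, hab, rfl⟩
    exact ⟨a, b, ha, hb, hab, ⟨p, hp, by simp⟩, ⟨q, hq, by simp⟩⟩
  · rintro ⟨a, b, ha, hb, hab, ⟨p, hp, hpz⟩, ⟨q, hq, hqz⟩⟩
    exact ⟨(p, 0), ⟨hp, rfl⟩, (0, q), ⟨rfl, hq⟩, a, b, ha, hb, hab, Prod.ext (by simpa) (by simpa)⟩

theorem subdirectSum_subset_prod (hP : Convex ℝ P) (hQ : Convex ℝ Q) (hP0 : (0 : E) ∈ P)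
    (hQ0 : (0 : G) ∈ Q) : subdirectSum P Q ⊆ P ×ˢ Q :=
  convexHull_min (union_subset (prod_mono .rfl (singleton_subset_iff.2 hQ0))
    (prod_mono (singleton_subset_iff.2 hP0) .rfl)) (hP.prod hQ)

variable {F : Set E} {H : Set G}

theorem isExtreme_subdirectSum_of_zero_mem (hP : Convex ℝ P) (hQ : Convex ℝ Q)
    (hF : IsExtreme ℝ P F) (hH : IsExtreme ℝ Q H) (hFconv : Convex ℝ F) (hHconv : Convex ℝ H)
    (hF0 : (0 : E) ∈ F) (hH0 : (0 : G) ∈ H) :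
    IsExtreme ℝ (subdirectSum P Q) (subdirectSum F H) := by
  have hinter : subdirectSum F H = subdirectSum P Q ∩ F ×ˢ H := by
    refine (subset_inter (subdirectSum_mono hF.subset hH.subset)
      (subdirectSum_subset_prod hFconv hHconv hF0 hH0)).antisymm ?_
    rintro z ⟨hz, hzF, hzH⟩
    obtain ⟨a, b, ha, hb, hab, hza, hzb⟩ := (mem_subdirectSum_iff hP hQ ⟨0, hF.subset hF0⟩
      ⟨0, hH.subset hH0⟩).1 hz
    exact (mem_subdirectSum_iff hFconv hHconv ⟨0, hF0⟩ ⟨0, hH0⟩).2 ⟨a, b, ha, hb, hab,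
      mem_smul_of_mem_smul_of_mem hF hF0 ha (by linarith) hza hzF,
      mem_smul_of_mem_smul_of_mem hH hH0 hb (by linarith) hzb hzH⟩
  rw [hinter]
  have hsub := subdirectSum_subset_prod hP hQ (hF.subset hF0) (hH.subset hH0)
  exact ⟨inter_subset_left, fun x hx y hy z hz hxyz ↦ ⟨hx,
    (isExtreme_prod hF hH).left_mem_of_mem_openSegment (hsub hx) (hsub hy) hz.2 hxyz⟩⟩

theorem isExtreme_subdirectSum_of_zero_notMem (hP : Convex ℝ P) (hQ : Convex ℝ Q)
    (hF : IsExtreme ℝ P F) (hH : IsExtreme ℝ Q H) (hFconv : Convex ℝ F) (hHconv : Convex ℝ H)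
    (hFne : F.Nonempty) (hHne : H.Nonempty) (hP0 : (0 : E) ∈ P) (hQ0 : (0 : G) ∈ Q)
    (hF0 : (0 : E) ∉ F) (hH0 : (0 : G) ∉ H) :
    IsExtreme ℝ (subdirectSum P Q) (subdirectSum F H) := by
  refine ⟨subdirectSum_mono hF.subset hH.subset, ?_⟩
  rintro x hx y hy _ hz ⟨s, t, hs, ht, hst, rfl⟩
  rw [mem_subdirectSum_iff hP hQ ⟨0, hP0⟩ ⟨0, hQ0⟩] at hx hy
  rw [mem_subdirectSum_iff hFconv hHconv hFne hHne] at hz ⊢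
  obtain ⟨a, b, ha, hb, hab, hxP, hxQ⟩ := hx
  obtain ⟨a', b', ha', hb', hab', hyP, hyQ⟩ := hy
  obtain ⟨c, d, -, -, hcd, hzF, hzH⟩ := hz
  have hle : c ≤ s * a + t * a' := le_of_mem_smul_of_mem_smul hF hP0 hF0 (by positivity)
    (smul_add_smul_mem_smul hP ha ha' hs.le ht.le hxP hyP) hzF
  have hle' : d ≤ s * b + t * b' := le_of_mem_smul_of_mem_smul hH hQ0 hH0 (by positivity)
    (smul_add_smul_mem_smul hQ hb hb' hs.le ht.le hxQ hyQ) hzH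
  have hsum : s * a + t * a' + (s * b + t * b') = 1 := by
    linear_combination s * hab + t * hab' + hst
  refine ⟨a, b, ha, hb, hab, left_mem_smul_of_mem_smul hF hFne ha ha' hs ht hxP hyP ?_,
    left_mem_smul_of_mem_smul hH hHne hb hb' hs ht hxQ hyQ ?_⟩
  · rwa [show s * a + t * a' = c by linarith]
  · rwa [show s * b + t * b' = d by linarith]

end SubdirectSum

section VertexJoin

variable {V W : Type*} [Zero V] [Zero W]

open Classical in
/-- The vertex set of the join of two simplices with vertex sets `S` and `T` that are placed in
complementary coordinate subspaces. -/
noncomputable def vertexJoin (S : Finset V) (T : Finset W) : Finset (V × W) :=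
  S.map (.sectL V 0) ∪ T.map (.sectR 0 W)

theorem coe_vertexJoin (S : Finset V) (T : Finset W) :
    (vertexJoin S T : Set (V × W)) = (S : Set V) ×ˢ {0} ∪ {0} ×ˢ (T : Set W) := by
  simp only [prod_singleton, singleton_prod, vertexJoin, Finset.coe_union, Finset.coe_map]
  rfl

theorem mem_vertexJoin {S : Finset V} {T : Finset W} {z : V × W} :
    z ∈ vertexJoin S T ↔ z.1 ∈ S ∧ z.2 = 0 ∨ z.1 = 0 ∧ z.2 ∈ T := by
  rw [← Finset.mem_coe, coe_vertexJoin]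
  rfl

theorem zero_notMem_vertexJoin {S : Finset V} {T : Finset W} :
    0 ∉ vertexJoin S T ↔ 0 ∉ S ∧ 0 ∉ T := by
  simp [mem_vertexJoin]

theorem exists_vertexJoin_eq {U : Finset (V × W)} (hU : ∀ z ∈ U, z.1 = 0 ∨ z.2 = 0) :
    ∃ S T, vertexJoin S T = U := by
  refine ⟨U.preimage _ (Function.Embedding.sectL V (0 : W)).injective.injOn,
    U.preimage _ (Function.Embedding.sectR (0 : V) W).injective.injOn, ?_⟩
  ext ⟨x, y⟩
  simp only [mem_vertexJoin, Finset.mem_preimage, Function.Embedding.sectL_apply,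
    Function.Embedding.sectR_apply]
  constructor
  · rintro (⟨h, rfl⟩ | ⟨rfl, h⟩) <;> exact h
  · intro h
    obtain rfl | rfl := hU _ h
    exacts [.inr ⟨rfl, h⟩, .inl ⟨h, rfl⟩]

theorem card_vertexJoin {S : Finset V} (hS : 0 ∉ S) (T : Finset W) :
    (vertexJoin S T).card = S.card + T.card := by
  classical
  rw [vertexJoin, Finset.card_union_of_disjoint, Finset.card_map, Finset.card_map]
  rw [Finset.disjoint_left]
  simp only [Finset.mem_map, Function.Embedding.sectL_apply, Function.Embedding.sectR_apply]
  rintro _ ⟨x, hx, rfl⟩ ⟨y, -, hxy⟩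
  obtain rfl : 0 = x := congrArg Prod.fst hxy
  exact hS hx

theorem vertexJoin_injOn :
    InjOn (fun p : Finset V × Finset W ↦ vertexJoin p.1 p.2) {p | 0 ∉ p.1 ∧ 0 ∉ p.2} := by
  rintro ⟨S, T⟩ ⟨hS, hT⟩ ⟨S', T'⟩ ⟨hS', hT'⟩ h
  simp only [Finset.ext_iff, mem_vertexJoin, Prod.forall] at h hS hT hS' hT'
  refine Prod.ext (Finset.ext fun x ↦ ?_) (Finset.ext fun y ↦ ?_)
  · have := h x 0
    aesop
  · have := h 0 y
    aesop

theorem affineIndependent_insert_zero {S : Set E} (hS : LinearIndepOn ℝ id S) :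
    AffineIndependent ℝ ((↑) : (insert 0 S : Set E) → E) := by
  have h0 : ∀ v ∈ S, v ≠ 0 := fun v hv ↦ hS.ne_zero hv
  have := (linearIndependent_set_iff_affineIndependent_vadd_union_singleton ℝ h0 (0 : E)).1 hS
  rwa [show {0} ∪ (fun v : E ↦ v +ᵥ (0 : E)) '' S = insert 0 S by simp] at this

theorem affineIndependent_cons_zero_vertexJoin {S : Finset E} {T : Finset G}
    (hS : LinearIndepOn ℝ id (S : Set E)) (hT : LinearIndepOn ℝ id (T : Set G))
    (h0 : 0 ∉ vertexJoin S T) :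
    AffineIndependent ℝ ((↑) : (vertexJoin S T).cons 0 h0 → E × G) := by
  have hcoe : (((vertexJoin S T).cons 0 h0 : Finset (E × G)) : Set (E × G)) =
      insert 0 (LinearMap.inl ℝ E G '' S ∪ LinearMap.inr ℝ E G '' T) := by
    rw [Finset.coe_cons, coe_vertexJoin, prod_singleton, singleton_prod]
    rfl
  have hind : LinearIndepOn ℝ id (LinearMap.inl ℝ E G '' S ∪ LinearMap.inr ℝ E G '' T) :=
    LinearIndependent.inl_union_inr (s := (S : Set E)) (t := (T : Set G)) hS hT
  exact (affineIndependent_insert_zero hind).mono hcoe.subset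

end VertexJoin

section SubdirectSum

variable {P : Set E} {Q : Set G}

theorem image_prodComm_subdirectSum (P : Set E) (Q : Set G) :
    (LinearEquiv.prodComm ℝ E G).toAffineEquiv '' subdirectSum P Q = subdirectSum Q P := by
  have := (LinearEquiv.prodComm ℝ E G).toLinearMap.image_convexHull (P ×ˢ {0} ∪ {0} ×ˢ Q)
  rw [image_union] at this
  refine this.trans ?_
  erw [image_swap_prod, image_swap_prod, union_comm]
  rfl

variable (hP : Convex ℝ P) (hQ : Convex ℝ Q) (hP0 : 0 ∈ P.extremePoints ℝ)
  (hQ0 : 0 ∈ Q.extremePoints ℝ)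
include hP hQ hP0 hQ0

theorem map_sectL_mem_simplexFaces_subdirectSum {S : Finset E} :
    S.map (.sectL E 0) ∈ simplexFaces (subdirectSum P Q) ↔ S ∈ simplexFaces P := by
  have hsub := subdirectSum_subset_prod hP hQ hP0.1 hQ0.1
  have hsup : P ×ˢ {0} ⊆ subdirectSum P Q := subset_union_left.trans (subset_convexHull ℝ _)
  have hinj := (Function.Embedding.sectL E (0 : G)).injective
  let e : E →ᵃ[ℝ] E × G := (LinearMap.inl ℝ E G).toAffineMap
  have hpre : e ⁻¹' subdirectSum P Q = P :=
    Subset.antisymm (fun _ hx ↦ (hsub hx).1) fun _ hx ↦ hsup ⟨hx, rfl⟩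
  have hrange : subdirectSum P Q ∩ range e = P ×ˢ {0} := by
    refine Subset.antisymm ?_ fun z hz ↦ ⟨hsup hz, z.1, Prod.ext rfl hz.2.symm⟩
    rintro _ ⟨hz, x, rfl⟩
    exact ⟨(hsub hz).1, rfl⟩
  have hext : IsExtreme ℝ (subdirectSum P Q) (subdirectSum P Q ∩ range e) :=
    hrange ▸ (isExtreme_prod .rfl (isExtreme_singleton.2 hQ0)).mono hsub hsup
  have := map_mem_simplexFaces_iff hinj hext (S := S)
  rwa [hpre] at this

theorem map_sectR_mem_simplexFaces_subdirectSum {T : Finset G} :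
    T.map (.sectR 0 G) ∈ simplexFaces (subdirectSum P Q) ↔ T ∈ simplexFaces Q := by
  rw [← map_mem_simplexFaces_image_iff (LinearEquiv.prodComm ℝ E G).toAffineEquiv, Finset.map_map,
    image_prodComm_subdirectSum, ← map_sectL_mem_simplexFaces_subdirectSum hQ hP hQ0 hP0]
  rfl

end SubdirectSum

section OriginLink

/-- The link of the origin in the complex of simplex faces of `P`. -/
def originLink (P : Set E) : Set (Finset E) :=
  {S | ∃ h : 0 ∉ S, S.cons 0 h ∈ simplexFaces P}

/-- The deletion of the origin from the complex of simplex faces of `P`. -/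
def originDeletion (P : Set E) : Set (Finset E) :=
  {S ∈ simplexFaces P | 0 ∉ S}

theorem originDeletion_subset (P : Set E) : originDeletion P ⊆ simplexFaces P :=
  sep_subset _ _

theorem originLink_subset_originDeletion (P : Set E) : originLink P ⊆ originDeletion P :=
  fun _ ⟨h, hS⟩ ↦ ⟨simplexFaces.mem_of_subset hS (Finset.subset_cons h), h⟩

variable {P : Set E} {Q : Set G} (hP : Convex ℝ P) (hQ : Convex ℝ Q)
  (hP0 : 0 ∈ P.extremePoints ℝ) (hQ0 : 0 ∈ Q.extremePoints ℝ)
include hP hQ hP0 hQ0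

theorem vertexJoin_mem_originDeletion {S : Finset E} {T : Finset G} (hS : S ∈ originDeletion P)
    (hT : T ∈ originDeletion Q) : vertexJoin S T ∈ originDeletion (subdirectSum P Q) := by
  have h0 : 0 ∉ vertexJoin S T := zero_notMem_vertexJoin.2 ⟨hS.2, hT.2⟩
  refine ⟨?_, h0⟩
  obtain rfl | hSne := S.eq_empty_or_nonempty
  · simpa [vertexJoin] using (map_sectR_mem_simplexFaces_subdirectSum hP hQ hP0 hQ0).2 hT.1
  obtain rfl | hTne := T.eq_empty_or_nonempty
  · simpa [vertexJoin] using (map_sectL_mem_simplexFaces_subdirectSum hP hQ hP0 hQ0).2 hS.1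
  refine ⟨(affineIndependent_cons_zero_vertexJoin (simplexFaces.linearIndepOn hS.1 hP0 hS.2)
    (simplexFaces.linearIndepOn hT.1 hQ0 hT.2) h0).mono
      (Finset.coe_subset.2 (Finset.subset_cons h0)), ?_⟩
  have hSne' : (convexHull ℝ (S : Set E)).Nonempty := convexHull_nonempty_iff.2 hSne
  have hTne' : (convexHull ℝ (T : Set G)).Nonempty := convexHull_nonempty_iff.2 hTne
  rw [coe_vertexJoin, ← subdirectSum_convexHull]
  exact isExtreme_subdirectSum_of_zero_notMem hP hQ hS.1.2 hT.1.2 (convex_convexHull ℝ _)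
    (convex_convexHull ℝ _) hSne' hTne' hP0.1 hQ0.1
    (simplexFaces.zero_notMem_convexHull hS.1 hP0 hS.2)
    (simplexFaces.zero_notMem_convexHull hT.1 hQ0 hT.2)

theorem vertexJoin_mem_originLink {S : Finset E} {T : Finset G} (hS : S ∈ originLink P)
    (hT : T ∈ originLink Q) : vertexJoin S T ∈ originLink (subdirectSum P Q) := by
  obtain ⟨hS', hS0⟩ := originLink_subset_originDeletion P hS
  obtain ⟨hT', hT0⟩ := originLink_subset_originDeletion Q hT
  have h0 := zero_notMem_vertexJoin.2 ⟨hS0, hT0⟩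
  refine ⟨h0,
    affineIndependent_cons_zero_vertexJoin (simplexFaces.linearIndepOn hS' hP0 hS0)
      (simplexFaces.linearIndepOn hT' hQ0 hT0) h0, ?_⟩
  have hcoe : insert 0 ((S : Set E) ×ˢ {0} ∪ {0} ×ˢ (T : Set G)) =
      insert 0 (S : Set E) ×ˢ {0} ∪ {0} ×ˢ insert 0 (T : Set G) := by
    simp only [insert_prod, prod_insert, image_singleton, singleton_union, union_insert,
      insert_union, insert_idem, Prod.mk_zero_zero]
  rw [Finset.coe_cons, coe_vertexJoin, hcoe, ← subdirectSum_convexHull]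
  obtain ⟨_, hS⟩ := hS
  obtain ⟨_, hT⟩ := hT
  rw [← Finset.coe_cons (h := hS0), ← Finset.coe_cons (h := hT0)]
  exact isExtreme_subdirectSum_of_zero_mem hP hQ hS.2 hT.2 (convex_convexHull ℝ _)
    (convex_convexHull ℝ _) (subset_convexHull ℝ _ (Finset.mem_cons_self _ _))
    (subset_convexHull ℝ _ (Finset.mem_cons_self _ _))

theorem simplexFaces_of_vertexJoin_mem {S : Finset E} {T : Finset G}
    (h : vertexJoin S T ∈ simplexFaces (subdirectSum P Q)) :
    S ∈ simplexFaces P ∧ T ∈ simplexFaces Q := by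
  classical
  exact ⟨(map_sectL_mem_simplexFaces_subdirectSum hP hQ hP0 hQ0).1
      (simplexFaces.mem_of_subset h Finset.subset_union_left),
    (map_sectR_mem_simplexFaces_subdirectSum hP hQ hP0 hQ0).1
      (simplexFaces.mem_of_subset h Finset.subset_union_right)⟩

omit hP hQ hP0 hQ0 in
theorem exists_vertexJoin_eq_of_mem_simplexFaces {U : Finset (E × G)}
    (hU : U ∈ simplexFaces (subdirectSum P Q)) : ∃ S T, vertexJoin S T = U := by
  refine exists_vertexJoin_eq fun z hz ↦ ?_
  obtain h | h := extremePoints_convexHull_subset (simplexFaces.coe_subset_extremePoints hU hz)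
  exacts [.inr h.2, .inl h.1]

theorem originDeletion_subdirectSum :
    originDeletion (subdirectSum P Q) =
      image2 vertexJoin (originDeletion P) (originDeletion Q) := by
  refine Subset.antisymm ?_
    (image2_subset_iff.2 fun S hS T hT ↦ vertexJoin_mem_originDeletion hP hQ hP0 hQ0 hS hT)
  rintro U ⟨hU, hU0⟩
  obtain ⟨S, T, rfl⟩ := exists_vertexJoin_eq_of_mem_simplexFaces hU
  obtain ⟨hS, hT⟩ := simplexFaces_of_vertexJoin_mem hP hQ hP0 hQ0 hU
  obtain ⟨hS0, hT0⟩ := zero_notMem_vertexJoin.1 hU0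
  exact ⟨S, ⟨hS, hS0⟩, T, ⟨hT, hT0⟩, rfl⟩

theorem originLink_subdirectSum :
    originLink (subdirectSum P Q) = image2 vertexJoin (originLink P) (originLink Q) := by
  refine Subset.antisymm ?_
    (image2_subset_iff.2 fun S hS T hT ↦ vertexJoin_mem_originLink hP hQ hP0 hQ0 hS hT)
  rintro U ⟨hU0, hU⟩
  obtain ⟨S, T, rfl⟩ := exists_vertexJoin_eq_of_mem_simplexFaces
    (simplexFaces.mem_of_subset hU (Finset.subset_cons hU0))
  obtain ⟨hS0, hT0⟩ := zero_notMem_vertexJoin.1 hU0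
  refine ⟨S, ⟨hS0, ?_⟩, T, ⟨hT0, ?_⟩, rfl⟩
  · refine (map_sectL_mem_simplexFaces_subdirectSum hP hQ hP0 hQ0).1
      (simplexFaces.mem_of_subset hU ?_)
    classical
    rw [Finset.map_cons]
    exact Finset.cons_subset_cons.2 Finset.subset_union_left
  · refine (map_sectR_mem_simplexFaces_subdirectSum hP hQ hP0 hQ0).1
      (simplexFaces.mem_of_subset hU ?_)
    classical
    rw [Finset.map_cons]
    exact Finset.cons_subset_cons.2 Finset.subset_union_right

end OriginLink

/-! ### Generating functions of face numbers -/

section CardSeries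

open PowerSeries

variable {ι κ μ : Type*}

/-- The generating function of the numbers of members of `𝒜` of each cardinality. -/
noncomputable def cardSeries (𝒜 : Set (Finset ι)) : ℤ⟦X⟧ :=
  mk fun n ↦ (cardCount 𝒜 n : ℤ)

theorem cardSeries_eq_sum {𝒜 : Set (Finset ι)} (h𝒜 : 𝒜.Finite) :
    cardSeries 𝒜 = ∑ S ∈ h𝒜.toFinset, X ^ S.card := by
  ext n
  simp only [cardSeries, coeff_mk, map_sum, coeff_X_pow, Finset.sum_boole]
  rw [cardCount, ← ncard_coe_finset]
  congr 2
  ext S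
  simp [eq_comm]

theorem cardSeries_union {𝒜 ℬ : Set (Finset ι)} (h𝒜 : 𝒜.Finite) (hℬ : ℬ.Finite)
    (hdisj : Disjoint 𝒜 ℬ) : cardSeries (𝒜 ∪ ℬ) = cardSeries 𝒜 + cardSeries ℬ := by
  classical
  rw [cardSeries_eq_sum (h𝒜.union hℬ), cardSeries_eq_sum h𝒜, cardSeries_eq_sum hℬ,
    h𝒜.toFinset_union hℬ, Finset.sum_union (by simpa using hdisj)]

theorem cardSeries_image2 {f : Finset ι → Finset κ → Finset μ} {𝒜 : Set (Finset ι)}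
    {ℬ : Set (Finset κ)} (h𝒜 : 𝒜.Finite) (hℬ : ℬ.Finite)
    (hinj : InjOn (fun p : Finset ι × Finset κ ↦ f p.1 p.2) (𝒜 ×ˢ ℬ))
    (hcard : ∀ S ∈ 𝒜, ∀ T ∈ ℬ, (f S T).card = S.card + T.card) :
    cardSeries (image2 f 𝒜 ℬ) = cardSeries 𝒜 * cardSeries ℬ := by
  classical
  have himage : (h𝒜.image2 f hℬ).toFinset =
      (h𝒜.toFinset ×ˢ hℬ.toFinset).image fun p ↦ f p.1 p.2 := by
    ext
    simp [and_assoc]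
  rw [cardSeries_eq_sum (h𝒜.image2 f hℬ), cardSeries_eq_sum h𝒜, cardSeries_eq_sum hℬ, himage,
    Finset.sum_image (by simpa using hinj), Finset.sum_mul_sum, Finset.sum_product]
  refine Finset.sum_congr rfl fun S hS ↦ Finset.sum_congr rfl fun T hT ↦ ?_
  rw [hcard S (h𝒜.mem_toFinset.1 hS) T (hℬ.mem_toFinset.1 hT), pow_add]

theorem cardSeries_image_insert [DecidableEq ι] {𝒜 : Set (Finset ι)} (h𝒜 : 𝒜.Finite) {a : ι}
    (ha : ∀ S ∈ 𝒜, a ∉ S) : cardSeries (insert a '' 𝒜) = X * cardSeries 𝒜 := by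
  have himage : (h𝒜.image (insert a)).toFinset = h𝒜.toFinset.image (insert a) := by
    ext
    simp
  have hinj : InjOn (insert a) 𝒜 := fun S hS T hT hST ↦ by
    rw [← Finset.erase_insert (ha S hS), hST, Finset.erase_insert (ha T hT)]
  rw [cardSeries_eq_sum (h𝒜.image _), himage, Finset.sum_image (by simpa using hinj),
    cardSeries_eq_sum h𝒜, Finset.mul_sum]
  refine Finset.sum_congr rfl fun S hS ↦ ?_
  rw [Finset.card_insert_of_notMem (ha S (h𝒜.mem_toFinset.1 hS)), pow_succ']

/-- The power series with nonnegative coefficients. -/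
def nonnegSeries : Subsemiring ℤ⟦X⟧ where
  carrier := {f | ∀ n, 0 ≤ coeff n f}
  mul_mem' hf hg n := by
    rw [coeff_mul]
    exact Finset.sum_nonneg fun p _ ↦ mul_nonneg (hf _) (hg _)
  one_mem' n := by
    rw [coeff_one]
    positivity
  add_mem' hf hg n := by
    rw [map_add]
    exact add_nonneg (hf n) (hg n)
  zero_mem' n := by rw [map_zero]

theorem X_mem_nonnegSeries : X ∈ nonnegSeries := fun n ↦ by
  rw [coeff_X]
  positivity

theorem cardSeries_mem_nonnegSeries (𝒜 : Set (Finset ι)) : cardSeries 𝒜 ∈ nonnegSeries :=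
  fun n ↦ by
    rw [cardSeries, coeff_mk]
    positivity

theorem cardSeries_sub_mem_nonnegSeries {𝒜 : Set (Finset ι)} {ℬ : Set (Finset κ)} :
    cardSeries ℬ - cardSeries 𝒜 ∈ nonnegSeries ↔ ∀ n, cardCount 𝒜 n ≤ cardCount ℬ n :=
  forall_congr' fun n ↦ by
    rw [map_sub, cardSeries, cardSeries, coeff_mk, coeff_mk, sub_nonneg, Nat.cast_le]

/-- Two complexes with link `a` and deletion `b`, whose joins have link `a * a'` and deletion
`b * b'`, are compared with two complexes having larger links `A` and smaller totals. -/
theorem join_sub_mem {R : Type*} [CommRing R] (N : Subsemiring R) {x a b A B a' b' A' B' : R}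
    (hx : x ∈ N) (hB : B ∈ N) (hB' : B' ∈ N) (ha : A - a ∈ N) (ha' : A' - a' ∈ N)
    (hA : B - A ∈ N) (hA' : B' - A' ∈ N) (h : x * a + b - (x * A + B) ∈ N)
    (h' : x * a' + b' - (x * A' + B') ∈ N) :
    x * (a * a') + b * b' - (x * (A * A') + B * B') ∈ N := by
  set D := A - a
  set D' := A' - a'
  set F := x * a + b - (x * A + B)
  set F' := x * a' + b' - (x * A' + B')
  have hb' : b' = x * D' + B' + F' := by ring
  have key : x * (a * a') + b * b' - (x * (A * A') + B * B') =
      x * D * (x * D' + D' + (B' - A')) + x * D' * (B - A) + (x * D + B) * F' + F * b' := by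
    ring
  rw [key, hb']
  have hxD := mul_mem hx ha
  have hxD' := mul_mem hx ha'
  exact add_mem (add_mem (add_mem (mul_mem hxD (add_mem (add_mem hxD' ha') hA')) (mul_mem hxD' hA))
    (mul_mem (add_mem hxD hB) h')) (mul_mem h (add_mem (add_mem hxD' hB') h'))

end CardSeries

section SubdirectSum

open PowerSeries

variable {P : Set E} {Q : Set G}

open Classical in
theorem insert_zero_image_originLink_union (P : Set E) :
    insert 0 '' originLink P ∪ originDeletion P = simplexFaces P := by
  refine Subset.antisymm (union_subset ?_ (originDeletion_subset P)) fun U hU ↦ ?_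
  · rintro _ ⟨S, ⟨hS0, hS⟩, rfl⟩
    rwa [← Finset.cons_eq_insert _ _ hS0]
  · by_cases h0 : 0 ∈ U
    · refine .inl ⟨U.erase 0, ⟨Finset.notMem_erase 0 U, ?_⟩, Finset.insert_erase h0⟩
      rwa [Finset.cons_eq_insert, Finset.insert_erase h0]
    · exact .inr ⟨hU, h0⟩

theorem cardSeries_simplexFaces (hP : (simplexFaces P).Finite) :
    cardSeries (simplexFaces P) =
      X * cardSeries (originLink P) + cardSeries (originDeletion P) := by
  classical
  have hdel : (originDeletion P).Finite := hP.subset (originDeletion_subset P)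
  have hlink : (originLink P).Finite := hdel.subset (originLink_subset_originDeletion P)
  have hdisj : Disjoint (insert 0 '' originLink P) (originDeletion P) := by
    rw [disjoint_left]
    rintro _ ⟨S, -, rfl⟩ hS
    exact hS.2 (Finset.mem_insert_self 0 S)
  rw [← insert_zero_image_originLink_union, cardSeries_union (hlink.image _) hdel hdisj,
    cardSeries_image_insert hlink fun S hS ↦ hS.1]

variable (hP : Convex ℝ P) (hQ : Convex ℝ Q) (hP0 : 0 ∈ P.extremePoints ℝ)
  (hQ0 : 0 ∈ Q.extremePoints ℝ) (hPfin : (simplexFaces P).Finite) (hQfin : (simplexFaces Q).Finite)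
include hP hQ hP0 hQ0 hPfin hQfin

theorem finite_simplexFaces_subdirectSum : (simplexFaces (subdirectSum P Q)).Finite := by
  classical
  have hdel : (originDeletion (subdirectSum P Q)).Finite := by
    rw [originDeletion_subdirectSum hP hQ hP0 hQ0]
    exact (hPfin.subset (originDeletion_subset P)).image2 _
      (hQfin.subset (originDeletion_subset Q))
  rw [← insert_zero_image_originLink_union]
  exact ((hdel.subset (originLink_subset_originDeletion _)).image _).union hdel

theorem cardSeries_simplexFaces_subdirectSum :
    cardSeries (simplexFaces (subdirectSum P Q)) =
      X * (cardSeries (originLink P) * cardSeries (originLink Q)) +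
        cardSeries (originDeletion P) * cardSeries (originDeletion Q) := by
  have hP' := hPfin.subset (originDeletion_subset P)
  have hQ' := hQfin.subset (originDeletion_subset Q)
  have hPlink := originLink_subset_originDeletion P
  have hQlink := originLink_subset_originDeletion Q
  have hinj : InjOn (fun p : Finset E × Finset G ↦ vertexJoin p.1 p.2)
      (originDeletion P ×ˢ originDeletion Q) :=
    vertexJoin_injOn.mono fun _ hp ↦ show _ ∧ _ from ⟨hp.1.2, hp.2.2⟩
  have hcard (S : Finset E) (hS : S ∈ originDeletion P) (T : Finset G) :
      (vertexJoin S T).card = S.card + T.card := card_vertexJoin hS.2 T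
  rw [cardSeries_simplexFaces (finite_simplexFaces_subdirectSum hP hQ hP0 hQ0 hPfin hQfin),
    originLink_subdirectSum hP hQ hP0 hQ0, originDeletion_subdirectSum hP hQ hP0 hQ0,
    cardSeries_image2 hP' hQ' hinj fun S hS T _ ↦ hcard S hS T,
    cardSeries_image2 (hP'.subset hPlink) (hQ'.subset hQlink)
      (hinj.mono (prod_mono hPlink hQlink)) fun S hS T _ ↦ hcard S (hPlink hS) T]

end SubdirectSum

section SubdirectSumComparison

variable {P : Set E} {Q : Set G}

theorem originLink_sub_originDeletion_mem_nonnegSeries (hP : (simplexFaces P).Finite) :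
    cardSeries (originDeletion P) - cardSeries (originLink P) ∈ nonnegSeries :=
  cardSeries_sub_mem_nonnegSeries.2 (cardCount_mono (originLink_subset_originDeletion P)
    (hP.subset (originDeletion_subset P)))

theorem SimplexFacesLE.subdirectSum {E' G' : Type*} [AddCommGroup E'] [Module ℝ E']
    [AddCommGroup G'] [Module ℝ G'] {P' : Set E'} {Q' : Set G'}
    (hP : Convex ℝ P) (hP' : Convex ℝ P') (hQ : Convex ℝ Q) (hQ' : Convex ℝ Q')
    (hP0 : 0 ∈ P.extremePoints ℝ) (hP0' : 0 ∈ P'.extremePoints ℝ)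
    (hQ0 : 0 ∈ Q.extremePoints ℝ) (hQ0' : 0 ∈ Q'.extremePoints ℝ)
    (hPP' : SimplexFacesLE P P') (hQQ' : SimplexFacesLE Q Q')
    (hPlink : ∀ n, cardCount (originLink P') n ≤ cardCount (originLink P) n)
    (hQlink : ∀ n, cardCount (originLink Q') n ≤ cardCount (originLink Q) n) :
    SimplexFacesLE (subdirectSum P Q) (subdirectSum P' Q') := by
  obtain ⟨hPfin, hPfin', hPle⟩ := hPP'
  obtain ⟨hQfin, hQfin', hQle⟩ := hQQ'
  refine ⟨finite_simplexFaces_subdirectSum hP hQ hP0 hQ0 hPfin hQfin,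
    finite_simplexFaces_subdirectSum hP' hQ' hP0' hQ0' hPfin' hQfin', ?_⟩
  rw [← cardSeries_sub_mem_nonnegSeries] at hPle hQle hPlink hQlink ⊢
  rw [cardSeries_simplexFaces_subdirectSum hP hQ hP0 hQ0 hPfin hQfin,
    cardSeries_simplexFaces_subdirectSum hP' hQ' hP0' hQ0' hPfin' hQfin']
  rw [cardSeries_simplexFaces hPfin, cardSeries_simplexFaces hPfin'] at hPle
  rw [cardSeries_simplexFaces hQfin, cardSeries_simplexFaces hQfin'] at hQle
  exact join_sub_mem nonnegSeries X_mem_nonnegSeries (cardSeries_mem_nonnegSeries _)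
    (cardSeries_mem_nonnegSeries _) hPlink hQlink
    (originLink_sub_originDeletion_mem_nonnegSeries hPfin)
    (originLink_sub_originDeletion_mem_nonnegSeries hQfin) hPle hQle

end SubdirectSumComparison

/-! ### Vertices and origin links of order and chain polytopes -/

section ZeroOnePoints

variable {ι : Type*} {P : Set (ι → ℝ)} {x : ι → ℝ}

theorem mem_extremePoints_of_eq_zero_or_one (hP : P ⊆ univ.pi fun _ ↦ Icc 0 1) (hx : x ∈ P)
    (h01 : ∀ p, x p = 0 ∨ x p = 1) : x ∈ P.extremePoints ℝ := by
  refine inter_extremePoints_subset_extremePoints_of_subset hP ⟨hx, ?_⟩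
  rw [extremePoints_pi]
  intro p _
  rw [extremePoints_Icc zero_le_one]
  exact h01 p

-- `x` is the midpoint of `x ^ 2` and `2 * x - x ^ 2`.
theorem eq_zero_or_one_of_mem_extremePoints (hx : x ∈ P.extremePoints ℝ) (hsq : x ^ 2 ∈ P)
    (hsq' : 2 * x - x ^ 2 ∈ P) (p : ι) : x p = 0 ∨ x p = 1 := by
  have hmid : x ∈ openSegment ℝ (x ^ 2) (2 * x - x ^ 2) := by
    refine ⟨1 / 2, 1 / 2, by norm_num, by norm_num, by norm_num, funext fun q ↦ ?_⟩
    simp only [Pi.add_apply, Pi.smul_apply, Pi.sub_apply, Pi.mul_apply, Pi.pow_apply,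
      Pi.ofNat_apply, smul_eq_mul]
    ring
  have hidem : x p ^ 2 = x p := congrFun (hx.2 hsq hsq' hmid) p
  rwa [sq, ← IsIdempotentElem, IsIdempotentElem.iff_eq_zero_or_one] at hidem

end ZeroOnePoints

section OrderAndChainPolytopes

variable {α : Type*} [PartialOrder α]

theorem convex_orderPolytope : Convex ℝ (orderPolytope α) := fun _ hx _ hy _ _ ha hb hab ↦
  ⟨fun p ↦ convex_Icc 0 1 (hx.1 p) (hy.1 p) ha hb hab, fun p q hpq ↦
    add_le_add (mul_le_mul_of_nonneg_left (hx.2 p q hpq) ha)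
      (mul_le_mul_of_nonneg_left (hy.2 p q hpq) hb)⟩

theorem convex_chainPolytope : Convex ℝ (chainPolytope α) := fun _ hx _ hy _ _ ha hb hab ↦ by
  refine ⟨fun p ↦ convex_Ici (0 : ℝ) (hx.1 p) (hy.1 p) ha hb hab, fun s hs ↦ ?_⟩
  simp only [Pi.add_apply, Pi.smul_apply, Finset.sum_add_distrib, ← Finset.smul_sum]
  exact convex_Iic (1 : ℝ) (hx.2 s hs) (hy.2 s hs) ha hb hab

theorem orderPolytope_subset_pi_Icc : orderPolytope α ⊆ univ.pi fun _ ↦ Icc 0 1 :=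
  fun _ hx p _ ↦ hx.1 p

theorem chainPolytope_subset_pi_Icc : chainPolytope α ⊆ univ.pi fun _ ↦ Icc 0 1 :=
  fun _ hx p _ ↦ ⟨hx.1 p, by simpa using hx.2 {p} (by simp)⟩

theorem zero_mem_orderPolytope : 0 ∈ orderPolytope α :=
  ⟨fun _ ↦ ⟨le_rfl, zero_le_one⟩, fun _ _ _ ↦ le_rfl⟩

theorem zero_mem_chainPolytope : 0 ∈ chainPolytope α :=
  ⟨fun _ ↦ le_rfl, fun s _ ↦ by simp⟩

theorem zero_mem_extremePoints_orderPolytope : 0 ∈ (orderPolytope α).extremePoints ℝ :=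
  mem_extremePoints_of_eq_zero_or_one orderPolytope_subset_pi_Icc zero_mem_orderPolytope
    fun _ ↦ .inl rfl

theorem zero_mem_extremePoints_chainPolytope : 0 ∈ (chainPolytope α).extremePoints ℝ :=
  mem_extremePoints_of_eq_zero_or_one chainPolytope_subset_pi_Icc zero_mem_chainPolytope
    fun _ ↦ .inl rfl

theorem sq_mem_orderPolytope {x : α → ℝ} (hx : x ∈ orderPolytope α) :
    x ^ 2 ∈ orderPolytope α :=
  ⟨fun p ↦ ⟨pow_nonneg (hx.1 p).1 2, pow_le_one₀ (hx.1 p).1 (hx.1 p).2⟩,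
    fun p q hpq ↦ pow_le_pow_left₀ (hx.1 p).1 (hx.2 p q hpq) 2⟩

theorem two_mul_sub_sq_mem_orderPolytope {x : α → ℝ} (hx : x ∈ orderPolytope α) :
    2 * x - x ^ 2 ∈ orderPolytope α := by
  simp only [orderPolytope, mem_ofPred_eq, Pi.sub_apply, Pi.mul_apply, Pi.pow_apply,
    Pi.ofNat_apply]
  refine ⟨fun p ↦ ?_, fun p q hpq ↦ ?_⟩
  · obtain ⟨hx0, hx1⟩ := hx.1 p
    constructor <;> nlinarith [sq_nonneg (x p - 1)]
  · nlinarith [hx.2 p q hpq, (hx.1 p).2, (hx.1 q).2]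

theorem finite_simplexFaces_orderPolytope [Finite α] : (simplexFaces (orderPolytope α)).Finite := by
  rw [finite_simplexFaces_iff]
  refine (Finite.pi' (t := fun _ : α ↦ ({0, 1} : Set ℝ)) fun _ ↦ toFinite _).subset ?_
  exact fun x hx ↦ eq_zero_or_one_of_mem_extremePoints hx (sq_mem_orderPolytope hx.1)
    (two_mul_sub_sq_mem_orderPolytope hx.1)

end OrderAndChainPolytopes

section ChainPolytopeLink

theorem simplexFaces.mem_segment_of_add_eq_add {P : Set E} {S : Finset E} (hS : S ∈ simplexFaces P)
    {x y u v : E} (hx : x ∈ S) (hy : y ∈ S) (hu : u ∈ P) (hv : v ∈ P) (h : u + v = x + y) :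
    u ∈ segment ℝ x y := by
  classical
  have hxy : {x, y} ∈ simplexFaces P :=
    simplexFaces.mem_of_subset hS (Finset.insert_subset hx (Finset.singleton_subset_iff.2 hy))
  have hext : IsExtreme ℝ P (segment ℝ x y) := by
    simpa only [Finset.coe_pair, convexHull_pair] using hxy.2
  refine hext.left_mem_of_mem_openSegment hu hv (midpoint_mem_segment x y) ?_
  rw [midpoint_eq_smul_add, ← h, ← midpoint_eq_smul_add]
  exact midpoint_mem_openSegment u v

variable {α : Type*} [PartialOrder α]

theorem mem_chainPolytope_of_le {x y : α → ℝ} (hy : y ∈ chainPolytope α) (hx : 0 ≤ x)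
    (hxy : x ≤ y) : x ∈ chainPolytope α :=
  ⟨hx, fun s hs ↦ (Finset.sum_le_sum fun p _ ↦ hxy p).trans (hy.2 s hs)⟩

variable [DecidableEq α]

theorem single_mem_chainPolytope (p : α) : Pi.single p 1 ∈ chainPolytope α := by
  refine ⟨Pi.single_nonneg (α := fun _ ↦ ℝ) |>.2 zero_le_one, fun s _ ↦ ?_⟩
  rw [Finset.sum_pi_single']
  split_ifs <;> norm_num

theorem single_add_single_mem_chainPolytope {p q : α} (hpq : ¬ p ≤ q) (hqp : ¬ q ≤ p) :
    Pi.single p 1 + Pi.single q 1 ∈ chainPolytope α := by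
  refine ⟨fun r ↦ add_nonneg ((single_mem_chainPolytope p).1 r) ((single_mem_chainPolytope q).1 r),
    fun s hs ↦ ?_⟩
  have hnot : ¬ (p ∈ s ∧ q ∈ s) := fun h ↦ (hs.total h.1 h.2).elim hpq hqp
  simp only [Pi.add_apply, Finset.sum_add_distrib, Finset.sum_pi_single']
  split_ifs <;> simp_all

theorem exists_eq_single_of_mem_simplexFaces {S : Finset (α → ℝ)}
    (hS : S ∈ simplexFaces (chainPolytope α)) (h0 : 0 ∈ S) {s : α → ℝ} (hs : s ∈ S) (hne : s ≠ 0) :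
    ∃ p, s = Pi.single p 1 := by
  obtain ⟨p, hp⟩ := Function.ne_iff.1 hne
  have hsC := simplexFaces.coe_subset hS hs
  have hnonneg : 0 ≤ Pi.single p (s p) := Pi.single_nonneg (α := fun _ ↦ ℝ) |>.2 (hsC.1 p)
  have hle : Pi.single p (s p) ≤ s := update_le_iff.2 ⟨le_rfl, fun q _ ↦ hsC.1 q⟩
  obtain ⟨t, -, hst⟩ := (segment_eq_image_lineMap ℝ 0 s).subset <|
    simplexFaces.mem_segment_of_add_eq_add hS h0 hs (mem_chainPolytope_of_le hsC hnonneg hle)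
      (mem_chainPolytope_of_le hsC (sub_nonneg.2 hle) (sub_le_self s hnonneg))
      (by rw [add_sub_cancel, zero_add])
  have htp : t * s p = s p := by simpa [AffineMap.lineMap_apply] using congrFun hst p
  obtain rfl : t = 1 := (mul_eq_right₀ hp).1 htp
  have hs_eq : s = s p • Pi.single p 1 := by
    rw [← Pi.single_smul, smul_eq_mul, mul_one]
    simpa using hst
  refine ⟨p, ?_⟩
  obtain h1 | h1 := (chainPolytope_subset_pi_Icc hsC p trivial).2.eq_or_lt
  · rw [hs_eq, h1, one_smul]
  · refine absurd ?_ hne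
    exact ((simplexFaces.coe_subset_extremePoints hS hs).2 zero_mem_chainPolytope
      (single_mem_chainPolytope p) ⟨1 - s p, s p, sub_pos.2 h1, (hsC.1 p).lt_of_ne' hp, by ring,
        by rw [smul_zero, zero_add, ← hs_eq]⟩).symm

theorem le_or_le_of_single_mem_of_mem_simplexFaces {S : Finset (α → ℝ)}
    (hS : S ∈ simplexFaces (chainPolytope α)) {p q : α} (hp : Pi.single p 1 ∈ S)
    (hq : Pi.single q 1 ∈ S) : p ≤ q ∨ q ≤ p := by
  by_contra! hpq
  have hne : p ≠ q := fun h ↦ hpq.1 h.le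
  obtain ⟨a, b, -, -, hab, h⟩ := simplexFaces.mem_segment_of_add_eq_add hS hp hq
    zero_mem_chainPolytope (single_add_single_mem_chainPolytope hpq.1 hpq.2) (zero_add _)
  have ha : a = 0 := by simpa [hne] using congrFun h p
  have hb : b = 0 := by simpa [hne.symm] using congrFun h q
  simp [ha, hb] at hab

/-- The standard basis vectors of `α → ℝ`: the vertices adjacent to `0` in the chain polytope. -/
def basisVector : α ↪ (α → ℝ) :=
  ⟨fun p ↦ Pi.single p 1, (Pi.linearIndependent_single_one α ℝ).injective⟩

theorem originLink_chainPolytope_subset :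
    originLink (chainPolytope α) ⊆ Finset.map basisVector '' {K | IsChain (· ≤ ·) (K : Set α)} := by
  classical
  rintro S ⟨hS0, hS⟩
  have hrange : (S : Set (α → ℝ)) ⊆ basisVector '' univ := fun s hs ↦ by
    obtain ⟨p, rfl⟩ := exists_eq_single_of_mem_simplexFaces hS (Finset.mem_cons_self 0 S)
      (Finset.mem_cons_of_mem hs) fun h ↦ hS0 (h ▸ hs)
    exact ⟨p, trivial, rfl⟩
  obtain ⟨K, -, hKS⟩ := Finset.subset_set_image_iff.1 hrange
  rw [← Finset.map_eq_image] at hKS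
  subst hKS
  refine mem_image_of_mem _ fun p hp q hq _ ↦ ?_
  exact le_or_le_of_single_mem_of_mem_simplexFaces hS
    (Finset.mem_cons_of_mem (Finset.mem_map_of_mem _ hp))
    (Finset.mem_cons_of_mem (Finset.mem_map_of_mem _ hq))

end ChainPolytopeLink

section OrderPolytopeLink

variable {α : Type*} [PartialOrder α]

theorem exists_isGreatest_of_isChain {s : Set α} (hs : IsChain (· ≤ ·) s) (hfin : s.Finite)
    (hne : s.Nonempty) : ∃ a, IsGreatest s a := by
  obtain ⟨a, ha⟩ := hfin.exists_maximal hne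
  exact ⟨a, ha.1, fun b hb ↦ (hs.total hb ha.1).elim id (ha.2 hb)⟩

theorem exists_isLeast_of_isChain {s : Set α} (hs : IsChain (· ≤ ·) s) (hfin : s.Finite)
    (hne : s.Nonempty) : ∃ a, IsLeast s a :=
  exists_isGreatest_of_isChain (α := αᵒᵈ) hs.symm hfin hne

theorem linearIndependent_chi_Ici : LinearIndependent ℝ fun k : α ↦ chi (Ici k) := by
  classical
  rw [linearIndependent_iff']
  intro s w hw
  by_contra! h
  obtain ⟨k, hk⟩ := (s.filter (w · ≠ 0)).exists_minimal (by simpa [Finset.Nonempty] using h)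
  obtain ⟨hks, hwk⟩ := Finset.mem_filter.1 hk.1
  refine hwk ?_
  have hwk' := congrFun hw k
  rw [Finset.sum_apply, Finset.sum_eq_single_of_mem k hks] at hwk'
  · simpa [chi] using hwk'
  · intro l hl hlk
    by_cases hlek : l ≤ k
    · have : w l = 0 := by
        by_contra hwl
        exact hlk (hk.eq_of_le (Finset.mem_filter.2 ⟨hl, hwl⟩) hlek)
      rw [this, zero_smul, Pi.zero_apply]
    · simp [chi, hlek]

/-- The indicator functions of principal filters: the vertices of the order polytope which span
simplices at `0`, one for every chain. -/
noncomputable def filterVector : α ↪ (α → ℝ) :=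
  ⟨fun k ↦ chi (Ici k), linearIndependent_chi_Ici.injective⟩

theorem filterVector_eq_one {k p : α} (h : k ≤ p) : filterVector k p = 1 := by
  simp [filterVector, chi, h]

theorem filterVector_eq_zero {k p : α} (h : ¬ k ≤ p) : filterVector k p = 0 := by
  simp [filterVector, chi, h]

/-- The face of the order polytope spanned by `0` and the vectors `filterVector k`, for `k` in a
chain `K`: the functions which are constant on the successive differences of the filters
generated by the elements of `K`, and zero outside of all of them. -/
def chainFace (K : Set α) : Set (α → ℝ) :=
  {x ∈ orderPolytope α | (∀ p, (∀ k ∈ K, ¬ k ≤ p) → x p = 0) ∧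
    ∀ p k, IsGreatest (K ∩ Iic p) k → x p = x k}

variable {K : Set α}

theorem isExtreme_chainFace : IsExtreme ℝ (orderPolytope α) (chainFace K) := by
  refine ⟨sep_subset _ _, ?_⟩
  rintro x hx y hy z ⟨-, hz0, hzK⟩ ⟨a, b, ha, hb, -, rfl⟩
  refine ⟨hx, fun p hp ↦ ?_, fun p k hk ↦ ?_⟩
  · have hp0 : a * x p + b * y p = 0 := hz0 p hp
    nlinarith [mul_nonneg ha.le (hx.1 p).1, mul_nonneg hb.le (hy.1 p).1]
  · have hpk : a * x p + b * y p = a * x k + b * y k := hzK p k hk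
    have hxk := hx.2 k p hk.1.2
    have hyk := mul_le_mul_of_nonneg_left (hy.2 k p hk.1.2) hb.le
    exact (le_of_mul_le_mul_left (by linarith) ha).antisymm hxk

theorem convex_chainFace : Convex ℝ (chainFace K) := by
  rintro x ⟨hx, hx0, hxK⟩ y ⟨hy, hy0, hyK⟩ a b ha hb hab
  refine ⟨convex_orderPolytope hx hy ha hb hab, fun p hp ↦ ?_, fun p k hk ↦ ?_⟩
  · simp [hx0 p hp, hy0 p hp]
  · simp [hxK p k hk, hyK p k hk]

theorem isCompact_chainFace : IsCompact (chainFace K) := by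
  refine (isCompact_univ_pi fun _ ↦ isCompact_Icc).of_isClosed_subset ?_
    ((sep_subset _ _).trans orderPolytope_subset_pi_Icc)
  simp only [chainFace, orderPolytope, ofPred_and, ofPred_forall]
  repeat' first
    | apply IsClosed.inter
    | refine isClosed_iInter fun _ ↦ ?_
    | exact isClosed_le (by fun_prop) (by fun_prop)
    | exact isClosed_eq (by fun_prop) (by fun_prop)

theorem filterVector_mem_orderPolytope (k : α) : filterVector k ∈ orderPolytope α := by
  refine ⟨fun p ↦ ?_, fun p q hpq ↦ ?_⟩
  · by_cases h : k ≤ p <;> simp [filterVector, chi, h]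
  · by_cases h : k ≤ p
    · rw [filterVector_eq_one h, filterVector_eq_one (h.trans hpq)]
    · rw [filterVector_eq_zero h]
      by_cases h' : k ≤ q <;> simp [filterVector, chi, h']

theorem insert_zero_image_filterVector_subset_chainFace :
    insert 0 (filterVector '' K) ⊆ chainFace K := by
  refine insert_subset ⟨zero_mem_orderPolytope, fun _ _ ↦ rfl, fun _ _ _ ↦ rfl⟩ ?_
  rintro _ ⟨k, hk, rfl⟩
  refine ⟨filterVector_mem_orderPolytope k, fun p hp ↦ filterVector_eq_zero (hp k hk),
    fun p l hl ↦ ?_⟩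
  by_cases hkp : k ≤ p
  · rw [filterVector_eq_one hkp, filterVector_eq_one (hl.2 ⟨hk, hkp⟩)]
  · rw [filterVector_eq_zero hkp, filterVector_eq_zero fun hkl ↦ hkp (hkl.trans hl.1.2)]

theorem eq_zero_or_one_of_mem_extremePoints_chainFace {x : α → ℝ}
    (hx : x ∈ (chainFace K).extremePoints ℝ) (p : α) : x p = 0 ∨ x p = 1 := by
  obtain ⟨hxO, hx0, hxK⟩ := hx.1
  refine eq_zero_or_one_of_mem_extremePoints hx
    ⟨sq_mem_orderPolytope hxO, fun p hp ↦ ?_, fun p k hk ↦ ?_⟩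
    ⟨two_mul_sub_sq_mem_orderPolytope hxO, fun p hp ↦ ?_, fun p k hk ↦ ?_⟩ p
  · simp [hx0 p hp]
  · simp [hxK p k hk]
  · simp [hx0 p hp]
  · simp [hxK p k hk]

theorem extremePoints_chainFace_subset (hK : IsChain (· ≤ ·) K) (hfin : K.Finite) :
    (chainFace K).extremePoints ℝ ⊆ insert 0 (filterVector '' K) := by
  intro x hx
  have h01 := eq_zero_or_one_of_mem_extremePoints_chainFace hx
  obtain ⟨hxO, hx0, hxK⟩ := hx.1
  have hsupport (p : α) (hp : x p ≠ 0) : ∃ k ∈ K, k ≤ p ∧ x k ≠ 0 := by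
    have hne : (K ∩ Iic p).Nonempty := by
      by_contra! hempty
      exact hp (hx0 p fun k hk hkp ↦ eq_empty_iff_forall_notMem.1 hempty k ⟨hk, hkp⟩)
    obtain ⟨k, hk⟩ := exists_isGreatest_of_isChain (hK.mono inter_subset_left)
      (hfin.subset inter_subset_left) hne
    exact ⟨k, hk.1.1, hk.1.2, hxK p k hk ▸ hp⟩
  refine or_iff_not_imp_left.2 fun hne ↦ ?_
  obtain ⟨p, hp⟩ := Function.ne_iff.1 hne
  obtain ⟨l, hl, -, hxl⟩ := hsupport p hp
  obtain ⟨k, ⟨hk, hxk⟩, hmin⟩ := exists_isLeast_of_isChain (s := {k ∈ K | x k ≠ 0})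
    (hK.mono (sep_subset _ _)) (hfin.subset (sep_subset _ _)) ⟨l, hl, hxl⟩
  refine ⟨k, hk, funext fun q ↦ ?_⟩
  by_cases hkq : k ≤ q
  · rw [filterVector_eq_one hkq]
    refine ((h01 q).resolve_left fun hq ↦ ?_).symm
    exact hxk (((hxO.2 k q hkq).trans hq.le).antisymm (hxO.1 k).1)
  · rw [filterVector_eq_zero hkq]
    by_contra hq
    obtain ⟨m, hm, hmq, hxm⟩ := hsupport q (Ne.symm hq)
    exact hkq ((hmin ⟨hm, hxm⟩).trans hmq)

theorem convexHull_insert_zero_image_filterVector (hK : IsChain (· ≤ ·) K) (hfin : K.Finite) :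
    convexHull ℝ (insert 0 (filterVector '' K)) = chainFace K := by
  refine (convexHull_min insert_zero_image_filterVector_subset_chainFace
    convex_chainFace).antisymm ?_
  calc chainFace K = closure (convexHull ℝ ((chainFace K).extremePoints ℝ)) :=
        (closure_convexHull_extremePoints isCompact_chainFace convex_chainFace).symm
    _ ⊆ closure (convexHull ℝ (insert 0 (filterVector '' K))) :=
        closure_mono (convexHull_mono (extremePoints_chainFace_subset hK hfin))
    _ = convexHull ℝ (insert 0 (filterVector '' K)) :=
        (((hfin.image _).insert 0).isClosed_convexHull ℝ).closure_eq

theorem map_filterVector_mem_originLink {K : Finset α} (hK : IsChain (· ≤ ·) (K : Set α)) :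
    K.map filterVector ∈ originLink (orderPolytope α) := by
  have hlin : LinearIndepOn ℝ id ((K.map filterVector : Finset (α → ℝ)) : Set (α → ℝ)) := by
    rw [Finset.coe_map]
    exact (linearIndependent_chi_Ici.linearIndepOn_id).mono (image_subset_range _ _)
  have h0 : 0 ∉ K.map filterVector := fun h ↦ hlin.ne_zero h rfl
  refine ⟨h0, ?_, ?_⟩
  · exact (affineIndependent_insert_zero hlin).mono (Finset.coe_cons (h := h0)).subset
  · rw [Finset.coe_cons, Finset.coe_map,
      convexHull_insert_zero_image_filterVector hK K.finite_toSet]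
    exact isExtreme_chainFace

theorem cardCount_originLink_chainPolytope_le [Finite α] (n : ℕ) :
    cardCount (originLink (chainPolytope α)) n ≤ cardCount (originLink (orderPolytope α)) n := by
  classical
  set 𝒦 : Set (Finset α) := {K | IsChain (· ≤ ·) (K : Set α)}
  have hlink : Finset.map filterVector '' 𝒦 ⊆ originLink (orderPolytope α) := by
    rintro _ ⟨K, hK, rfl⟩
    exact map_filterVector_mem_originLink hK
  have hfin : (originLink (orderPolytope α)).Finite := finite_simplexFaces_orderPolytope.subset
    ((originLink_subset_originDeletion _).trans (originDeletion_subset _))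
  calc cardCount (originLink (chainPolytope α)) n
      ≤ cardCount (Finset.map basisVector '' 𝒦) n :=
        cardCount_mono originLink_chainPolytope_subset (𝒦.toFinite.image _) n
    _ = cardCount (Finset.map filterVector '' 𝒦) n := by
        rw [cardCount_image_map, cardCount_image_map]
    _ ≤ cardCount (originLink (orderPolytope α)) n := cardCount_mono hlink hfin n

end OrderPolytopeLink

/-! ### Disjoint unions and ordinal sums -/

theorem exists_mem_Icc_forall_le_forall_ge {ι κ : Type*} {f : ι → ℝ} {g : κ → ℝ}
    (hf : ∀ i, f i ≤ 1) (hg : ∀ j, 0 ≤ g j) (hfg : ∀ i j, f i ≤ g j) :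
    ∃ a ∈ Icc (0 : ℝ) 1, (∀ i, f i ≤ a) ∧ ∀ j, a ≤ g j := by
  obtain ⟨a, hge, hle⟩ := exists_between_of_forall_le (insert_nonempty 0 (range f))
    (insert_nonempty 1 (range g)) <| by
      simp only [forall_mem_insert, forall_mem_range]
      exact ⟨⟨zero_le_one, hg⟩, fun i ↦ ⟨hf i, hfg i⟩⟩
  simp only [mem_upperBounds, mem_lowerBounds, forall_mem_insert, forall_mem_range] at hge hle
  exact ⟨a, ⟨hge.1, hle.1⟩, hge.2, hle.2⟩

section ScaledPolytopes

open Pointwise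

variable {α : Type*} [PartialOrder α] {a : ℝ} {u : α → ℝ}

theorem mem_smul_chainPolytope_iff (ha : 0 ≤ a) :
    u ∈ a • chainPolytope α ↔
      (∀ p, 0 ≤ u p) ∧ ∀ s : Finset α, IsChain (· ≤ ·) (s : Set α) → ∑ p ∈ s, u p ≤ a := by
  obtain rfl | ha := ha.eq_or_lt
  · rw [zero_smul_set ⟨0, zero_mem_chainPolytope⟩, Set.mem_zero]
    refine ⟨fun h ↦ by simp [h], fun h ↦ funext fun p ↦ le_antisymm ?_ (h.1 p)⟩
    simpa using h.2 {p} (by simp)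
  · simp only [mem_smul_set_iff_inv_smul_mem₀ ha.ne', chainPolytope, mem_ofPred_eq, Pi.smul_apply,
      smul_eq_mul, ← Finset.mul_sum, inv_mul_le_one₀ ha, inv_pos.2 ha, mul_nonneg_iff_of_pos_left]

theorem mem_smul_orderPolytope_iff (ha : 0 ≤ a) :
    u ∈ a • orderPolytope α ↔
      (∀ p, 0 ≤ u p ∧ u p ≤ a) ∧ ∀ p q, p ≤ q → u p ≤ u q := by
  obtain rfl | ha := ha.eq_or_lt
  · rw [zero_smul_set ⟨0, zero_mem_orderPolytope⟩, Set.mem_zero]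
    exact ⟨fun h ↦ by simp [h], fun h ↦ funext fun p ↦ le_antisymm (h.1 p).2 (h.1 p).1⟩
  · simp only [mem_smul_set_iff_inv_smul_mem₀ ha.ne', orderPolytope, mem_ofPred_eq, Pi.smul_apply,
      smul_eq_mul, inv_mul_le_one₀ ha, inv_pos.2 ha, mul_nonneg_iff_of_pos_left,
      mul_le_mul_iff_of_pos_left]

end ScaledPolytopes

section Coordinates

variable {α β : Type*}

/-- The affine reflection `x ↦ 1 - x`, read as a map between the function spaces of a poset and of
its dual, so that it exchanges their order polytopes. -/
noncomputable def dualReflection (α : Type*) : (α → ℝ) ≃ᵃ[ℝ] (αᵒᵈ → ℝ) :=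
  (LinearEquiv.funCongrLeft ℝ ℝ OrderDual.ofDual).toAffineEquiv.trans
    (AffineEquiv.constVSub ℝ (fun _ ↦ 1))

theorem dualReflection_apply (x : α → ℝ) (p : αᵒᵈ) :
    dualReflection α x p = 1 - x (OrderDual.ofDual p) := rfl

/-- The splitting of a function on a disjoint union into its two restrictions. -/
noncomputable def sumSplit (α β : Type*) : (α ⊕ β → ℝ) ≃ᵃ[ℝ] (α → ℝ) × (β → ℝ) :=
  (LinearEquiv.sumArrowLequivProdArrow α β ℝ ℝ).toAffineEquiv

theorem sumSplit_apply (x : α ⊕ β → ℝ) :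
    sumSplit α β x = (fun p ↦ x (.inl p), fun q ↦ x (.inr q)) := rfl

/-- The splitting of a function on an ordinal sum into its two restrictions. -/
noncomputable def lexSplit (α β : Type*) : (α ⊕ₗ β → ℝ) ≃ᵃ[ℝ] (α → ℝ) × (β → ℝ) :=
  (LinearEquiv.funCongrLeft ℝ ℝ toLex).toAffineEquiv.trans (sumSplit α β)

/-- `lexSplit` followed by the reflection of the second component. -/
noncomputable def lexSplitReflect (α β : Type*) : (α ⊕ₗ β → ℝ) ≃ᵃ[ℝ] (α → ℝ) × (βᵒᵈ → ℝ) :=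
  (lexSplit α β).trans ((AffineEquiv.refl ℝ (α → ℝ)).prodCongr (dualReflection β))

theorem lexSplitReflect_apply (x : α ⊕ₗ β → ℝ) :
    lexSplitReflect α β x =
      (fun p ↦ x (toLex (.inl p)), fun q ↦ 1 - x (toLex (.inr (OrderDual.ofDual q)))) := rfl

end Coordinates

section Duality

variable {α : Type*} [PartialOrder α]

theorem chainPolytope_orderDual : (chainPolytope αᵒᵈ : Set (α → ℝ)) = chainPolytope α := by
  ext x
  exact and_congr_right fun _ ↦ forall_congr' fun s ↦
    imp_congr_left ⟨fun h ↦ h.symm, fun h ↦ h.symm⟩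

theorem dualReflection_image_orderPolytope :
    dualReflection α '' orderPolytope α = orderPolytope αᵒᵈ := by
  refine ((dualReflection α).toEquiv.eq_preimage_iff_image_eq _ _).1 ?_
  ext x
  simp only [orderPolytope, mem_preimage, mem_ofPred_eq, AffineEquiv.coe_toEquiv,
    dualReflection_apply, OrderDual.forall, OrderDual.ofDual_toDual, OrderDual.toDual_le_toDual,
    sub_le_sub_iff_left, sub_nonneg, sub_le_self_iff]
  exact and_congr (forall_congr' fun p ↦ and_comm) forall_comm

theorem cardCount_originLink_chainPolytope_le_dual [Finite α] (n : ℕ) :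
    cardCount (originLink (chainPolytope α)) n ≤ cardCount (originLink (orderPolytope αᵒᵈ)) n := by
  have : Finite αᵒᵈ := inferInstanceAs (Finite α)
  rw [← chainPolytope_orderDual (α := α)]
  exact cardCount_originLink_chainPolytope_le (α := αᵒᵈ) n

end Duality

section DisjointUnion

variable {α β : Type*} [PartialOrder α] [PartialOrder β]

theorem isChain_disjSum_iff {s : Finset α} {t : Finset β} :
    IsChain (· ≤ ·) (s.disjSum t : Set (α ⊕ β)) ↔
      IsChain (· ≤ ·) (s : Set α) ∧ IsChain (· ≤ ·) (t : Set β) ∧ (s = ∅ ∨ t = ∅) := by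
  simp only [IsChain, Set.Pairwise, Finset.mem_coe, Sum.forall, Finset.inl_mem_disjSum,
    Finset.inr_mem_disjSum, Sum.inl_le_inl_iff, Sum.inr_le_inr_iff, Sum.not_inl_le_inr,
    Sum.not_inr_le_inl, ne_eq, Sum.inl.injEq, Sum.inr.injEq, reduceCtorEq, not_false_eq_true,
    or_self, imp_false, Finset.eq_empty_iff_forall_notMem]
  grind

theorem sumSplit_image_orderPolytope :
    sumSplit α β '' orderPolytope (α ⊕ β) = orderPolytope α ×ˢ orderPolytope β := by
  refine ((sumSplit α β).toEquiv.eq_preimage_iff_image_eq _ _).1 ?_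
  ext x
  simp only [orderPolytope, mem_preimage, mem_prod, mem_ofPred_eq, AffineEquiv.coe_toEquiv,
    sumSplit_apply, Sum.forall, Sum.inl_le_inl_iff, Sum.inr_le_inr_iff, Sum.not_inl_le_inr,
    Sum.not_inr_le_inl, false_imp_iff, forall_and]
  tauto

theorem mem_chainPolytope_sum_iff {x : α ⊕ β → ℝ} :
    x ∈ chainPolytope (α ⊕ β) ↔
      (fun p ↦ x (.inl p)) ∈ chainPolytope α ∧ (fun q ↦ x (.inr q)) ∈ chainPolytope β := by
  refine ⟨fun ⟨h0, h1⟩ ↦ ⟨⟨fun p ↦ h0 _, fun s hs ↦ ?_⟩, fun q ↦ h0 _, fun t ht ↦ ?_⟩, ?_⟩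
  · simpa using h1 (s.disjSum ∅) (isChain_disjSum_iff.2 ⟨hs, by simp, .inr rfl⟩)
  · simpa using h1 (Finset.disjSum ∅ t) (isChain_disjSum_iff.2 ⟨by simp, ht, .inl rfl⟩)
  · rintro ⟨⟨h0, h1⟩, h0', h1'⟩
    refine ⟨Sum.forall.2 ⟨h0, h0'⟩, fun r hr ↦ ?_⟩
    rw [← r.toLeft_disjSum_toRight] at hr ⊢
    rw [Finset.sum_disjSum]
    obtain ⟨hs, ht, h | h⟩ := isChain_disjSum_iff.1 hr
    · simpa only [h, Finset.sum_empty, zero_add] using h1' _ ht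
    · simpa only [h, Finset.sum_empty, add_zero] using h1 _ hs

theorem sumSplit_image_chainPolytope :
    sumSplit α β '' chainPolytope (α ⊕ β) = chainPolytope α ×ˢ chainPolytope β :=
  ((sumSplit α β).toEquiv.eq_preimage_iff_image_eq _ _).1 <| ext fun _ ↦ mem_chainPolytope_sum_iff

theorem simplexFacesLE_sum (hα : SimplexFacesLE (orderPolytope α) (chainPolytope α))
    (hβ : SimplexFacesLE (orderPolytope β) (chainPolytope β)) :
    SimplexFacesLE (orderPolytope (α ⊕ β)) (chainPolytope (α ⊕ β)) := by
  rw [← SimplexFacesLE.image_iff (sumSplit α β) (sumSplit α β), sumSplit_image_orderPolytope,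
    sumSplit_image_chainPolytope]
  exact hα.prod hβ

end DisjointUnion

section OrdinalSum

variable {α β : Type*} [PartialOrder α] [PartialOrder β]

theorem isChain_map_toLex_disjSum_iff {s : Finset α} {t : Finset β} :
    IsChain (· ≤ ·) ((s.disjSum t).map toLex.toEmbedding : Set (α ⊕ₗ β)) ↔
      IsChain (· ≤ ·) (s : Set α) ∧ IsChain (· ≤ ·) (t : Set β) := by
  simp only [IsChain, Set.Pairwise, Finset.mem_coe, Lex.forall, Sum.forall, Finset.mem_map_equiv,
    toLex_symm_eq, ofLex_toLex, Finset.inl_mem_disjSum, Finset.inr_mem_disjSum,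
    Sum.Lex.inl_le_inl_iff, Sum.Lex.inr_le_inr_iff, Sum.Lex.inl_le_inr, ne_eq, toLex_inj,
    Sum.inl.injEq, Sum.inr.injEq]
  grind

theorem mem_chainPolytope_lex_iff {x : α ⊕ₗ β → ℝ} :
    x ∈ chainPolytope (α ⊕ₗ β) ↔
      (∀ p, 0 ≤ x p) ∧ ∀ (s : Finset α) (t : Finset β), IsChain (· ≤ ·) (s : Set α) →
        IsChain (· ≤ ·) (t : Set β) →
          ∑ p ∈ s, x (toLex (.inl p)) + ∑ q ∈ t, x (toLex (.inr q)) ≤ 1 := by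
  refine and_congr_right fun _ ↦ ⟨fun h s t hs ht ↦ ?_, fun h r hr ↦ ?_⟩
  · simpa only [Finset.sum_map, Finset.sum_disjSum, Equiv.coe_toEmbedding] using
      h _ (isChain_map_toLex_disjSum_iff.2 ⟨hs, ht⟩)
  · obtain ⟨⟨s, t⟩, rfl⟩ := (Finset.sumEquiv.symm.toEquiv.trans toLex.finsetCongr).surjective r
    obtain ⟨hs, ht⟩ := isChain_map_toLex_disjSum_iff.1 hr
    simpa [Finset.sum_disjSum] using h s t hs ht

theorem mem_orderPolytope_lex_iff {x : α ⊕ₗ β → ℝ} :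
    x ∈ orderPolytope (α ⊕ₗ β) ↔
      (fun p ↦ x (toLex (.inl p))) ∈ orderPolytope α ∧
        (fun q ↦ x (toLex (.inr q))) ∈ orderPolytope β ∧
          ∀ p q, x (toLex (.inl p)) ≤ x (toLex (.inr q)) := by
  simp only [orderPolytope, mem_ofPred_eq, Lex.forall, Sum.forall, Sum.Lex.inl_le_inl_iff,
    Sum.Lex.inr_le_inr_iff, Sum.Lex.inl_le_inr, Sum.Lex.not_inr_le_inl, false_imp_iff,
    forall_const, forall_and]
  tauto

open Pointwise

theorem lexSplit_image_chainPolytope :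
    lexSplit α β '' chainPolytope (α ⊕ₗ β) =
      subdirectSum (chainPolytope α) (chainPolytope β) := by
  refine ((lexSplit α β).toEquiv.eq_preimage_iff_image_eq _ _).1 <| ext fun x ↦ ?_
  rw [mem_chainPolytope_lex_iff, mem_preimage, mem_subdirectSum_iff convex_chainPolytope
    convex_chainPolytope ⟨0, zero_mem_chainPolytope⟩ ⟨0, zero_mem_chainPolytope⟩]
  constructor
  · rintro ⟨h0, h1⟩
    have hle1 (s : Finset α) (hs : IsChain (· ≤ ·) (s : Set α)) :
        ∑ p ∈ s, x (toLex (.inl p)) ≤ 1 := by simpa using h1 s ∅ hs (by simp)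
    have hle1' (t : Finset β) (ht : IsChain (· ≤ ·) (t : Set β)) :
        ∑ q ∈ t, x (toLex (.inr q)) ≤ 1 := by simpa using h1 ∅ t (by simp) ht
    obtain ⟨a, ⟨ha0, ha1⟩, hle, hge⟩ := exists_mem_Icc_forall_le_forall_ge
      (f := fun s : {s : Finset α // IsChain (· ≤ ·) (s : Set α)} ↦ ∑ p ∈ s.1, x (toLex (.inl p)))
      (g := fun t : {t : Finset β // IsChain (· ≤ ·) (t : Set β)} ↦
        1 - ∑ q ∈ t.1, x (toLex (.inr q)))
      (fun s ↦ hle1 s s.2) (fun t ↦ sub_nonneg.2 (hle1' t t.2))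
      fun s t ↦ le_sub_iff_add_le.2 (h1 s t s.2 t.2)
    exact ⟨a, 1 - a, ha0, sub_nonneg.2 ha1, add_sub_cancel _ _,
      (mem_smul_chainPolytope_iff ha0).2 ⟨fun p ↦ h0 _, fun s hs ↦ hle ⟨s, hs⟩⟩,
      (mem_smul_chainPolytope_iff (sub_nonneg.2 ha1)).2
        ⟨fun q ↦ h0 _, fun t ht ↦ le_sub_comm.1 (hge ⟨t, ht⟩)⟩⟩
  · rintro ⟨a, b, ha, hb, hab, h, h'⟩
    rw [mem_smul_chainPolytope_iff ha] at h
    rw [mem_smul_chainPolytope_iff hb] at h'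
    exact ⟨Lex.forall.2 (Sum.forall.2 ⟨h.1, h'.1⟩), fun s t hs ht ↦
      hab ▸ add_le_add (h.2 s hs) (h'.2 t ht)⟩

theorem lexSplitReflect_image_orderPolytope :
    lexSplitReflect α β '' orderPolytope (α ⊕ₗ β) =
      subdirectSum (orderPolytope α) (orderPolytope βᵒᵈ) := by
  refine ((lexSplitReflect α β).toEquiv.eq_preimage_iff_image_eq _ _).1 <| ext fun x ↦ ?_
  rw [mem_orderPolytope_lex_iff, mem_preimage, mem_subdirectSum_iff convex_orderPolytope
    convex_orderPolytope ⟨0, zero_mem_orderPolytope⟩ ⟨0, zero_mem_orderPolytope⟩]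
  constructor
  · rintro ⟨⟨h01, hmono⟩, ⟨h01', hmono'⟩, hle⟩
    obtain ⟨a, ⟨ha0, ha1⟩, hge, hle⟩ :=
      exists_mem_Icc_forall_le_forall_ge (fun p ↦ (h01 p).2) (fun q ↦ (h01' q).1) hle
    refine ⟨a, 1 - a, ha0, sub_nonneg.2 ha1, add_sub_cancel _ _, ?_, ?_⟩
    · exact (mem_smul_orderPolytope_iff ha0).2 ⟨fun p ↦ ⟨(h01 p).1, hge p⟩, hmono⟩
    · exact (mem_smul_orderPolytope_iff (sub_nonneg.2 ha1)).2
        ⟨fun q ↦ ⟨sub_nonneg.2 (h01' q.ofDual).2, sub_le_sub_left (hle q.ofDual) 1⟩,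
          fun p q hpq ↦ sub_le_sub_left (hmono' q.ofDual p.ofDual hpq) 1⟩
  · rintro ⟨a, b, ha, hb, hab, h, h'⟩
    obtain ⟨h01, hmono⟩ := (mem_smul_orderPolytope_iff ha).1 h
    obtain ⟨h01', hmono'⟩ := (mem_smul_orderPolytope_iff hb).1 h'
    simp only [AffineEquiv.coe_toEquiv, lexSplitReflect_apply, OrderDual.forall,
      OrderDual.toDual_le_toDual, OrderDual.ofDual_toDual, sub_nonneg] at h01 hmono h01' hmono'
    refine ⟨⟨fun p ↦ ⟨(h01 p).1, ?_⟩, hmono⟩, ⟨fun p ↦ ⟨?_, (h01' p).1⟩, fun p q hpq ↦ ?_⟩,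
      fun p q ↦ ?_⟩
    · linarith [h01 p]
    · linarith [h01' p]
    · linarith [hmono' q p hpq]
    · linarith [h01 p, h01' q]

theorem simplexFacesLE_lex [Finite α] [Finite β]
    (hα : SimplexFacesLE (orderPolytope α) (chainPolytope α))
    (hβ : SimplexFacesLE (orderPolytope β) (chainPolytope β)) :
    SimplexFacesLE (orderPolytope (α ⊕ₗ β)) (chainPolytope (α ⊕ₗ β)) := by
  have hβ' : SimplexFacesLE (orderPolytope βᵒᵈ) (chainPolytope β) := by
    rwa [← SimplexFacesLE.image_iff (dualReflection β) (.refl ℝ (β → ℝ)),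
      dualReflection_image_orderPolytope, AffineEquiv.coe_refl, image_id] at hβ
  rw [← SimplexFacesLE.image_iff (lexSplitReflect α β) (lexSplit α β),
    lexSplitReflect_image_orderPolytope, lexSplit_image_chainPolytope]
  exact .subdirectSum convex_orderPolytope convex_chainPolytope convex_orderPolytope
    convex_chainPolytope zero_mem_extremePoints_orderPolytope zero_mem_extremePoints_chainPolytope
    zero_mem_extremePoints_orderPolytope zero_mem_extremePoints_chainPolytope hα hβ'
    cardCount_originLink_chainPolytope_le cardCount_originLink_chainPolytope_le_dual

end OrdinalSum

/-! ### The transfer map of an `X`-free poset -/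

section PartialSums

variable {α : Type*} [PartialOrder α] [Fintype α]

open Classical in
/-- The sum of a function over the principal ideal of `p`. -/
noncomputable def lowerSum (p : α) : (α → ℝ) →ₗ[ℝ] ℝ := ∑ q with q ≤ p, LinearMap.proj q

open Classical in
/-- The sum of a function over the principal filter of `p`. -/
noncomputable def upperSum (p : α) : (α → ℝ) →ₗ[ℝ] ℝ := ∑ q with p ≤ q, LinearMap.proj q

open Classical in
theorem lowerSum_apply (p : α) (y : α → ℝ) : lowerSum p y = ∑ q with q ≤ p, y q := by
  simp only [lowerSum, LinearMap.sum_apply, LinearMap.proj_apply]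

open Classical in
theorem upperSum_apply (p : α) (y : α → ℝ) : upperSum p y = ∑ q with p ≤ q, y q :=
  lowerSum_apply (α := αᵒᵈ) p y

variable {y : α → ℝ}

theorem eq_zero_of_lowerSum_eq_zero {L : Set α} (hL : IsLowerSet L)
    (h : ∀ p ∈ L, lowerSum p y = 0) (p : α) (hp : p ∈ L) : y p = 0 := by
  classical
  induction p using WellFoundedLT.induction with
  | ind p ih =>
    rw [← h p hp, lowerSum_apply]
    refine (Finset.sum_eq_single_of_mem p (by simp) fun q hq hqp ↦ ?_).symm
    have hqp := (Finset.mem_filter.1 hq).2.lt_of_ne hqp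
    exact ih q hqp (hL hqp.le hp)

theorem eq_zero_of_upperSum_eq_zero {U : Set α} (hU : IsUpperSet U)
    (h : ∀ p ∈ U, upperSum p y = 0) (p : α) (hp : p ∈ U) : y p = 0 :=
  eq_zero_of_lowerSum_eq_zero (α := αᵒᵈ) hU.toDual h p hp

theorem lowerSum_mono (hy : 0 ≤ y) {p q : α} (hpq : p ≤ q) : lowerSum p y ≤ lowerSum q y := by
  classical
  rw [lowerSum_apply, lowerSum_apply]
  exact Finset.sum_le_sum_of_subset_of_nonneg
    (Finset.monotone_filter_right _ fun r _ hr ↦ hr.trans hpq) fun r _ _ ↦ hy r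

theorem upperSum_anti (hy : 0 ≤ y) {p q : α} (hpq : p ≤ q) : upperSum q y ≤ upperSum p y :=
  lowerSum_mono (α := αᵒᵈ) hy hpq

theorem lowerSum_eq_add_sum_lt [DecidableLT α] (p : α) (y : α → ℝ) :
    lowerSum p y = y p + ∑ q with q < p, y q := by
  classical
  rw [lowerSum_apply, ← Finset.sum_insert (by simp)]
  exact Finset.sum_congr (by ext q; simp [le_iff_eq_or_lt]) fun _ _ ↦ rfl

theorem lowerSum_eq_add_of_isGreatest {p m : α} (hm : IsGreatest (Iio p) m) (y : α → ℝ) :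
    lowerSum p y = y p + lowerSum m y := by
  classical
  rw [lowerSum_eq_add_sum_lt, lowerSum_apply]
  congr! 3 with q
  exact ⟨fun hq ↦ hm.2 hq, fun hq ↦ hq.trans_lt hm.1⟩

theorem nonneg_of_lowerSum_le {p : α} (hp : IsChain (· ≤ ·) (Iic p)) (h0 : 0 ≤ lowerSum p y)
    (hle : ∀ q ≤ p, lowerSum q y ≤ lowerSum p y) : 0 ≤ y p := by
  classical
  obtain hempty | hne := (Iio p).eq_empty_or_nonempty
  · have hfilter : ({q | q < p} : Finset α) = ∅ :=
      Finset.filter_eq_empty_iff.2 fun q _ ↦ eq_empty_iff_forall_notMem.1 hempty q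
    rwa [lowerSum_eq_add_sum_lt, hfilter, Finset.sum_empty, add_zero] at h0
  · obtain ⟨m, hm⟩ :=
      exists_isGreatest_of_isChain (hp.mono Iio_subset_Iic_self) (toFinite _) hne
    have h := hle m hm.1.le
    rwa [lowerSum_eq_add_of_isGreatest hm, le_add_iff_nonneg_left] at h

theorem nonneg_of_upperSum_le {p : α} (hp : IsChain (· ≤ ·) (Ici p)) (h0 : 0 ≤ upperSum p y)
    (hle : ∀ q, p ≤ q → upperSum q y ≤ upperSum p y) : 0 ≤ y p :=
  nonneg_of_lowerSum_le (α := αᵒᵈ) hp.symm h0 hle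

theorem sum_le_of_lowerSum_le (hy : 0 ≤ y) {s : Finset α} (hs : IsChain (· ≤ ·) (s : Set α))
    {c : ℝ} (hc : 0 ≤ c) (h : ∀ m ∈ s, lowerSum m y ≤ c) : ∑ q ∈ s, y q ≤ c := by
  classical
  obtain rfl | hne := s.eq_empty_or_nonempty
  · rwa [Finset.sum_empty]
  · obtain ⟨m, hm⟩ := exists_isGreatest_of_isChain hs s.finite_toSet hne
    calc ∑ q ∈ s, y q ≤ ∑ q with q ≤ m, y q :=
          Finset.sum_le_sum_of_subset_of_nonneg (fun q hq ↦ by simpa using hm.2 hq) fun q _ _ ↦ hy q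
      _ = lowerSum m y := (lowerSum_apply m y).symm
      _ ≤ c := h m hm.1

theorem sum_le_of_upperSum_le (hy : 0 ≤ y) {s : Finset α} (hs : IsChain (· ≤ ·) (s : Set α))
    {c : ℝ} (hc : 0 ≤ c) (h : ∀ m ∈ s, upperSum m y ≤ c) : ∑ q ∈ s, y q ≤ c :=
  sum_le_of_lowerSum_le (α := αᵒᵈ) hy hs.symm hc h

theorem lowerSum_nonneg (hy : 0 ≤ y) (p : α) : 0 ≤ lowerSum p y := by
  rw [lowerSum_apply]
  exact Finset.sum_nonneg fun q _ ↦ hy q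

theorem upperSum_nonneg (hy : 0 ≤ y) (p : α) : 0 ≤ upperSum p y :=
  lowerSum_nonneg (α := αᵒᵈ) hy p

theorem lowerSum_le_one (hy : y ∈ chainPolytope α) {p : α} (hp : IsChain (· ≤ ·) (Iic p)) :
    lowerSum p y ≤ 1 := by
  rw [lowerSum_apply]
  exact hy.2 _ (by rwa [Finset.coe_filter_univ])

theorem upperSum_le_one (hy : y ∈ chainPolytope α) {p : α} (hp : IsChain (· ≤ ·) (Ici p)) :
    upperSum p y ≤ 1 := by
  rw [upperSum_apply]
  exact hy.2 _ (by rwa [Finset.coe_filter_univ])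

theorem lowerSum_add_upperSum_le_one (hy : y ∈ chainPolytope α) {p q : α} (hpq : p < q)
    (hp : IsChain (· ≤ ·) (Iic p)) (hq : IsChain (· ≤ ·) (Ici q)) :
    lowerSum p y + upperSum q y ≤ 1 := by
  classical
  have hdisj : Disjoint ({r | r ≤ p} : Finset α) ({r | q ≤ r} : Finset α) :=
    Finset.disjoint_filter.2 fun r _ hrp hqr ↦ (hqr.trans hrp).not_gt hpq
  rw [lowerSum_apply, upperSum_apply, ← Finset.sum_union hdisj]
  refine hy.2 _ ?_
  simp only [Finset.coe_union, Finset.coe_filter, Finset.mem_univ, true_and]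
  exact isChain_union.2 ⟨hp, hq, fun a ha b hb _ ↦ .inl (ha.trans (hpq.le.trans hb))⟩

end PartialSums

section TransferMap

variable {α : Type*} [PartialOrder α]

/-- A lower set `L` such that the poset is a chain below each element of `L` and above each element
outside `L`. -/
structure IsChainSplit (L : Set α) : Prop where
  isLowerSet : IsLowerSet L
  isChain_Iic : ∀ p ∈ L, IsChain (· ≤ ·) (Iic p)
  isChain_Ici : ∀ p ∉ L, IsChain (· ≤ ·) (Ici p)

theorem isChainSplit_of_not_hasX {α : Type} [PartialOrder α] (h : ¬ HasX α) :
    IsChainSplit {p : α | IsChain (· ≤ ·) (Iic p)} := by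
  refine ⟨fun p q hqp hp ↦ hp.mono (Iic_subset_Iic.2 hqp), fun p hp ↦ hp, fun p hp c hc d hd _ ↦ ?_⟩
  by_contra! hcd
  refine hp fun a ha b hb _ ↦ ?_
  by_contra! hab
  exact h ⟨a, b, p, c, d, ha.lt_of_ne (by rintro rfl; exact hab.2 hb),
    hb.lt_of_ne (by rintro rfl; exact hab.1 ha), hc.lt_of_ne (by rintro rfl; exact hcd.1 hd),
    hd.lt_of_ne (by rintro rfl; exact hcd.2 hc), hab.1, hab.2, hcd.1, hcd.2⟩

variable [Fintype α] {L : Set α}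

open Classical in
/-- The linear part of `transferEquiv`. -/
noncomputable def transferLinear (L : Set α) : (α → ℝ) →ₗ[ℝ] (α → ℝ) :=
  LinearMap.pi fun p ↦ if p ∈ L then lowerSum p else -upperSum p

theorem transferLinear_of_mem {p : α} (hp : p ∈ L) (y : α → ℝ) :
    transferLinear L y p = lowerSum p y := by
  simp only [transferLinear, LinearMap.pi_apply, if_pos hp]

theorem transferLinear_of_notMem {p : α} (hp : p ∉ L) (y : α → ℝ) :
    transferLinear L y p = -upperSum p y := by
  simp only [transferLinear, LinearMap.pi_apply, if_neg hp, LinearMap.neg_apply]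

theorem transferLinear_injective (hL : IsLowerSet L) : Function.Injective (transferLinear L) := by
  refine (injective_iff_map_eq_zero _).2 fun y hy ↦ funext fun p ↦ ?_
  by_cases hp : p ∈ L
  · refine eq_zero_of_lowerSum_eq_zero hL (fun q hq ↦ ?_) p hp
    rw [← transferLinear_of_mem hq, hy, Pi.zero_apply]
  · refine eq_zero_of_upperSum_eq_zero hL.compl (fun q hq ↦ ?_) p hp
    rw [← neg_eq_zero, ← transferLinear_of_notMem hq, hy, Pi.zero_apply]

/-- The affine transfer map attached to a lower set `L`: it sums a function over principal ideals on
`L`, and subtracts its sums over principal filters from `1` outside `L`. -/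
noncomputable def transferEquiv (hL : IsLowerSet L) : (α → ℝ) ≃ᵃ[ℝ] (α → ℝ) :=
  (LinearEquiv.ofInjectiveEndo _ (transferLinear_injective hL)).toAffineEquiv.trans
    (AffineEquiv.constVAdd ℝ _ (chi Lᶜ))

theorem transferEquiv_apply (hL : IsLowerSet L) (y : α → ℝ) :
    transferEquiv hL y = chi Lᶜ + transferLinear L y := rfl

theorem transferEquiv_of_mem (hL : IsLowerSet L) {p : α} (hp : p ∈ L) (y : α → ℝ) :
    transferEquiv hL y p = lowerSum p y := by
  simp [transferEquiv_apply, transferLinear_of_mem hp, chi, hp]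

theorem transferEquiv_of_notMem (hL : IsLowerSet L) {p : α} (hp : p ∉ L) (y : α → ℝ) :
    transferEquiv hL y p = 1 - upperSum p y := by
  simp [transferEquiv_apply, transferLinear_of_notMem hp, chi, hp, sub_eq_add_neg]

namespace IsChainSplit

variable {y : α → ℝ}

theorem transferEquiv_mem_orderPolytope (hL : IsChainSplit L) (hy : y ∈ chainPolytope α) :
    transferEquiv hL.isLowerSet y ∈ orderPolytope α := by
  refine ⟨fun p ↦ ?_, fun p q hpq ↦ ?_⟩
  · by_cases hp : p ∈ L
    · rw [transferEquiv_of_mem _ hp]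
      exact ⟨lowerSum_nonneg hy.1 p, lowerSum_le_one hy (hL.isChain_Iic p hp)⟩
    · rw [transferEquiv_of_notMem _ hp, sub_nonneg, sub_le_self_iff]
      exact ⟨upperSum_le_one hy (hL.isChain_Ici p hp), upperSum_nonneg hy.1 p⟩
  · by_cases hp : p ∈ L <;> by_cases hq : q ∈ L
    · rw [transferEquiv_of_mem _ hp, transferEquiv_of_mem _ hq]
      exact lowerSum_mono hy.1 hpq
    · rw [transferEquiv_of_mem _ hp, transferEquiv_of_notMem _ hq, le_sub_iff_add_le]
      exact lowerSum_add_upperSum_le_one hy (hpq.lt_of_ne (ne_of_mem_of_not_mem hp hq))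
        (hL.isChain_Iic p hp) (hL.isChain_Ici q hq)
    · exact absurd (hL.isLowerSet hpq hq) hp
    · rw [transferEquiv_of_notMem _ hp, transferEquiv_of_notMem _ hq]
      exact sub_le_sub_left (upperSum_anti hy.1 hpq) 1

theorem nonneg_of_transferEquiv_mem (hL : IsChainSplit L)
    (hy : transferEquiv hL.isLowerSet y ∈ orderPolytope α) : 0 ≤ y := by
  intro p
  by_cases hp : p ∈ L
  · have hlower (q : α) (hq : q ≤ p) :=
      transferEquiv_of_mem hL.isLowerSet (hL.isLowerSet hq hp) y
    refine nonneg_of_lowerSum_le (hL.isChain_Iic p hp) ?_ fun q hq ↦ ?_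
    · rw [← hlower p le_rfl]
      exact (hy.1 p).1
    · rw [← hlower q hq, ← hlower p le_rfl]
      exact hy.2 q p hq
  · have hupper (q : α) (hq : p ≤ q) := transferEquiv_of_notMem hL.isLowerSet
      (fun hqL ↦ hp (hL.isLowerSet hq hqL)) y
    refine nonneg_of_upperSum_le (hL.isChain_Ici p hp) ?_ fun q hq ↦ ?_
    · rw [← sub_le_self_iff 1, ← hupper p le_rfl]
      exact (hy.1 p).2
    · rw [← sub_le_sub_iff_left 1, ← hupper q hq, ← hupper p le_rfl]
      exact hy.2 p q hq

theorem mem_chainPolytope_of_transferEquiv_mem (hL : IsChainSplit L)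
    (hy : transferEquiv hL.isLowerSet y ∈ orderPolytope α) : y ∈ chainPolytope α := by
  classical
  have hy0 := hL.nonneg_of_transferEquiv_mem hy
  refine ⟨hy0, fun s hs ↦ ?_⟩
  have hle (m : {m // m ∈ s ∧ m ∈ L}) (n : {n // n ∈ s ∧ n ∉ L}) : (m : α) ≤ n :=
    (hs.total m.2.1 n.2.1).resolve_right fun h ↦ n.2.2 (hL.isLowerSet h m.2.2)
  obtain ⟨c, ⟨hc0, hc1⟩, hge, hle⟩ := exists_mem_Icc_forall_le_forall_ge
    (fun m ↦ (hy.1 _).2) (fun n ↦ (hy.1 _).1) fun m n ↦ hy.2 _ _ (hle m n)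
  have hlower : ∑ q ∈ s with q ∈ L, y q ≤ c := by
    refine sum_le_of_lowerSum_le hy0 (hs.mono (Finset.filter_subset _ _)) hc0 fun m hm ↦ ?_
    have hm := Finset.mem_filter.1 hm
    exact (transferEquiv_of_mem hL.isLowerSet hm.2 y).ge.trans (hge ⟨m, hm⟩)
  have hupper : ∑ q ∈ s with q ∉ L, y q ≤ 1 - c := by
    refine sum_le_of_upperSum_le hy0 (hs.mono (Finset.filter_subset _ _)) (sub_nonneg.2 hc1)
      fun n hn ↦ ?_
    have hn := Finset.mem_filter.1 hn
    exact le_sub_comm.1 ((hle ⟨n, hn⟩).trans (transferEquiv_of_notMem hL.isLowerSet hn.2 y).le)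
  calc ∑ q ∈ s, y q = ∑ q ∈ s with q ∈ L, y q + ∑ q ∈ s with q ∉ L, y q :=
        (Finset.sum_filter_add_sum_filter_not s (· ∈ L) y).symm
    _ ≤ c + (1 - c) := add_le_add hlower hupper
    _ = 1 := add_sub_cancel c 1

theorem transferEquiv_image_chainPolytope (hL : IsChainSplit L) :
    transferEquiv hL.isLowerSet '' chainPolytope α = orderPolytope α :=
  ((transferEquiv hL.isLowerSet).toEquiv.eq_preimage_iff_image_eq _ _).1 <| ext fun _ ↦
    ⟨hL.transferEquiv_mem_orderPolytope, hL.mem_chainPolytope_of_transferEquiv_mem⟩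

end IsChainSplit

end TransferMap

theorem IsChainSplit.simplexFacesLE {α : Type*} [PartialOrder α] [Finite α] {L : Set α}
    (hL : IsChainSplit L) : SimplexFacesLE (orderPolytope α) (chainPolytope α) := by
  cases nonempty_fintype α
  rw [← SimplexFacesLE.image_iff (.refl ℝ (α → ℝ)) (transferEquiv hL.isLowerSet),
    hL.transferEquiv_image_chainPolytope, AffineEquiv.coe_refl, image_id]
  exact ⟨finite_simplexFaces_orderPolytope, finite_simplexFaces_orderPolytope, fun _ ↦ le_rfl⟩

theorem InFam.finite_and_simplexFacesLE {α : Type} {inst : PartialOrder α} (h : InFam α inst) :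
    Finite α ∧ SimplexFacesLE (orderPolytope α) (chainPolytope α) := by
  induction h with
  | xfree _ _ hfin hx => exact ⟨hfin, (isChainSplit_of_not_hasX hx).simplexFacesLE⟩
  | disjUnion _ _ _ _ hα hβ =>
    obtain ⟨_, hα⟩ := hα
    obtain ⟨_, hβ⟩ := hβ
    exact ⟨inferInstance, simplexFacesLE_sum hα hβ⟩
  | @ordinalSum α β _ _ _ _ hα hβ =>
    obtain ⟨_, hα⟩ := hα
    obtain ⟨_, hβ⟩ := hβ
    exact ⟨inferInstanceAs (Finite (α ⊕ β)), simplexFacesLE_lex hα hβ⟩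

/-- every poset in the family `F` satisfies `s_k(O(P)) ≤ s_k(C(P))`
for all `k ≥ 0`. -/
theorem family_simpCount_ineq (α : Type) (inst : PartialOrder α) (h : InFam α inst) :
    ∀ k : ℤ, 0 ≤ k →
      simpCount (@orderPolytope α inst) k ≤ simpCount (@chainPolytope α inst) k := by
  intro k hk
  obtain ⟨-, hle⟩ := h.finite_and_simplexFacesLE
  lift k to ℕ using hk
  rw [simpCount_eq_cardCount, simpCount_eq_cardCount]
  exact hle.cardCount_le (k + 1)
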